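/- arXiv:1901.05645 — 6 statements merged into one kernel-verified Lean document; each statement's English description precedes it below -/
import Mathlib

section
/- Suppose there exist θ^L < θ^H in (0,1) such that, wherever u'' exists, u''(θ) < 0 for θ ∈ [0,θ^L), u''(θ) > 0 for θ ∈ (θ^L,θ^H), and u''(θ) < 0 for θ ∈ (θ^H,1]. Fix y^L, y^H ∈ ℝ and suppose there exists an open pooling set P with Γ_P(θ^L) = y^L and Γ_P(θ^H) = y^H. Define θ_*^L as the smallest θ ∈ [θ^L,1] with Γ_{[0,θ)}(θ^L) = y^L and θ_*^H as the largest θ ∈ [0,θ^H] with Γ_{(θ,1]}(θ^H) = y^H. If θ_*^L ≤ θ_*^H, then P_* = [0,θ_*^L) ∪ (θ_*^H,1] satisfies the two constraints and is the unique maximizer of ∫_0^1 u''(θ) Γ_P(θ) dθ among all open pooling sets P with Γ_P(θ^L) = y^L and Γ_P(θ^H) = y^H: every other such P yields a strictly smaller value of this integral. -/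
open MeasureTheory Set
open scoped Classical

noncomputable section

/-- CDF associated with the density `f` (relevant on `[0,1]`): `F(x) = ∫_0^x f`. -/
def cdfF (f : ℝ → ℝ) (x : ℝ) : ℝ := ∫ t in (0:ℝ)..x, f t

/-- Conditional mean `E_F[θ | (ξ,ζ)]` of `θ` on the interval `(ξ, ζ)` under density `f`. -/
def condMean (f : ℝ → ℝ) (ξ ζ : ℝ) : ℝ :=
  (∫ t in ξ..ζ, t * f t) / (∫ t in ξ..ζ, f t)

/-- `f` is a strictly positive density of a probability measure on `[0,1]`. -/
def IsDensity (f : ℝ → ℝ) : Prop :=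
  (∀ θ ∈ Icc (0:ℝ) 1, 0 < f θ) ∧ IntegrableOn f (Icc (0:ℝ) 1) ∧
    (∫ t in (0:ℝ)..1, f t) = 1

/-- An open pooling set: a relatively open subset of `[0,1]`. -/
def IsPoolingSet (P : Set ℝ) : Prop :=
  ∃ U : Set ℝ, IsOpen U ∧ P = U ∩ Icc (0:ℝ) 1

/-- Left endpoint `ξ_i` of the interval component of `θ` in `P`. -/
def compInf (P : Set ℝ) (θ : ℝ) : ℝ := sInf (connectedComponentIn P θ)

/-- Right endpoint `ζ_i` of the interval component of `θ` in `P`. -/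
def compSup (P : Set ℝ) (θ : ℝ) : ℝ := sSup (connectedComponentIn P θ)

/-- The posterior-mean map induced by the pooling set `P`: states in a pooled
interval are mapped to the conditional mean of that interval, other states to
themselves. -/
def poolMean (f : ℝ → ℝ) (P : Set ℝ) (θ : ℝ) : ℝ :=
  if θ ∈ P then condMean f (compInf P θ) (compSup P θ) else θ

/-- The induced distribution `G_P` of posterior means. -/
def Gp (f : ℝ → ℝ) (P : Set ℝ) (θ : ℝ) : ℝ :=
  if θ ∈ P then
    (if θ < condMean f (compInf P θ) (compSup P θ) then cdfF f (compInf P θ)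
     else cdfF f (compSup P θ))
  else cdfF f θ

/-- `Γ_P(θ) = ∫_0^θ G_P(t) dt`. -/
def Gam (f : ℝ → ℝ) (P : Set ℝ) (θ : ℝ) : ℝ := ∫ t in (0:ℝ)..θ, Gp f P t

/-- The value `∫_0^1 u(θ) dG_P(θ)` of the pooling set `P` under payoff `u`,
written as the expectation of `u` composed with the posterior-mean map. -/
def poolValue (f : ℝ → ℝ) (u : ℝ → ℝ) (P : Set ℝ) : ℝ :=
  ∫ θ in (0:ℝ)..1, u (poolMean f P θ) * f θ

/-- `P` is an optimal pooling set for `u`. -/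
def IsOptimal (f : ℝ → ℝ) (u : ℝ → ℝ) (P : Set ℝ) : Prop :=
  IsPoolingSet P ∧ ∀ Q : Set ℝ, IsPoolingSet Q → poolValue f u Q ≤ poolValue f u P

/-- `u` is continuously differentiable on `[0,1]` with derivative `u'`, and `u'`
is absolutely continuous with integrable a.e. derivative `u''` (encoded via the
fundamental theorem of calculus). -/
def C1AC (u u' u'' : ℝ → ℝ) : Prop :=
  (∀ θ ∈ Icc (0:ℝ) 1, HasDerivAt u (u' θ) θ) ∧
  ContinuousOn u' (Icc (0:ℝ) 1) ∧
  IntegrableOn u'' (Icc (0:ℝ) 1) ∧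
  (∀ θ ∈ Icc (0:ℝ) 1, u' θ = u' 0 + ∫ t in (0:ℝ)..θ, u'' t)

/-! ### Basic facts on `F` -/

theorem aux_fint {f : ℝ → ℝ} (hf : IsDensity f) {a b : ℝ} (ha : a ∈ Icc (0:ℝ) 1)
    (hb : b ∈ Icc (0:ℝ) 1) : IntervalIntegrable f volume a b := by
  have h : IntegrableOn f (uIcc a b) :=
    hf.2.1.mono_set (by
      rw [← uIcc_of_le (zero_le_one' ℝ)] at *
      exact uIcc_subset_uIcc ha hb)
  exact h.intervalIntegrable

theorem aux_F_sub {f : ℝ → ℝ} (hf : IsDensity f) {a b : ℝ} (ha : a ∈ Icc (0:ℝ) 1)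
    (hb : b ∈ Icc (0:ℝ) 1) : cdfF f b - cdfF f a = ∫ t in a..b, f t := by
  unfold cdfF
  have h0 : (0:ℝ) ∈ Icc (0:ℝ) 1 := ⟨le_rfl, zero_le_one⟩
  exact intervalIntegral.integral_interval_sub_left (aux_fint hf h0 hb) (aux_fint hf h0 ha)

theorem aux_F_zero (f : ℝ → ℝ) : cdfF f 0 = 0 := by simp [cdfF]

theorem aux_F_one {f : ℝ → ℝ} (hf : IsDensity f) : cdfF f 1 = 1 := hf.2.2

theorem aux_F_strict {f : ℝ → ℝ} (hf : IsDensity f) : StrictMonoOn (cdfF f) (Icc (0:ℝ) 1) := by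
  intro a ha b hb hab
  have : 0 < ∫ t in a..b, f t := by
    apply intervalIntegral.intervalIntegral_pos_of_pos_on (aux_fint hf ha hb) _ hab
    intro x hx
    exact hf.1 x ⟨ha.1.trans hx.1.le, hx.2.le.trans hb.2⟩
  have := aux_F_sub hf ha hb
  linarith

theorem aux_F_cont {f : ℝ → ℝ} (hf : IsDensity f) : ContinuousOn (cdfF f) (Icc (0:ℝ) 1) := by
  have := intervalIntegral.continuousOn_primitive_interval (f := f) (μ := volume) (a := 0) (b := 1)
    (by rw [uIcc_of_le (zero_le_one' ℝ)]; exact hf.2.1)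
  rwa [uIcc_of_le (zero_le_one' ℝ)] at this

theorem aux_F_int {f : ℝ → ℝ} (hf : IsDensity f) {a b : ℝ} (ha : a ∈ Icc (0:ℝ) 1)
    (hb : b ∈ Icc (0:ℝ) 1) : IntervalIntegrable (cdfF f) volume a b := by
  apply ContinuousOn.intervalIntegrable
  apply (aux_F_cont hf).mono
  rw [← uIcc_of_le (zero_le_one' ℝ)] at *
  exact uIcc_subset_uIcc ha hb

theorem aux_tf_int {f : ℝ → ℝ} (hf : IsDensity f) {a b : ℝ} (ha : a ∈ Icc (0:ℝ) 1)
    (hb : b ∈ Icc (0:ℝ) 1) : IntervalIntegrable (fun t => t * f t) volume a b :=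
  (aux_fint hf ha hb).continuousOn_mul continuousOn_id

/-- Integration by parts. -/
theorem aux_parts {f : ℝ → ℝ} (hf : IsDensity f) {a b : ℝ} (ha : a ∈ Icc (0:ℝ) 1)
    (hb : b ∈ Icc (0:ℝ) 1) :
    (∫ t in a..b, cdfF f t) = b * cdfF f b - a * cdfF f a - ∫ t in a..b, t * f t := by
  have h0 : (0:ℝ) ∈ Icc (0:ℝ) 1 := ⟨le_rfl, zero_le_one⟩
  have h1 : (1:ℝ) ∈ Icc (0:ℝ) 1 := ⟨zero_le_one, le_rfl⟩
  have hsub : uIcc a b ⊆ uIcc 0 1 := by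
    rw [← uIcc_of_le (zero_le_one' ℝ)] at *
    exact uIcc_subset_uIcc ha hb
  have hI := aux_fint hf h0 h1
  have hFac : AbsolutelyContinuousOnInterval (cdfF f) a b := by
    have := hI.absolutelyContinuousOnInterval_intervalIntegral (c := 0) (by simp)
    exact this.mono hsub
  have hid : AbsolutelyContinuousOnInterval (fun t : ℝ => t) a b := by
    have : LipschitzOnWith 1 (fun t : ℝ => t) (uIcc a b) := LipschitzWith.id.lipschitzOnWith
    exact this.absolutelyContinuousOnInterval
  have key := AbsolutelyContinuousOnInterval.integral_mul_deriv_eq_deriv_mul hid hFac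
  have e1 : (∫ t in a..b, t * deriv (cdfF f) t) = ∫ t in a..b, t * f t := by
    apply intervalIntegral.integral_congr_ae
    filter_upwards [hI.ae_hasDerivAt_integral] with x hx hxm
    have := hx (hsub (uIoc_subset_uIcc hxm)) 0 (by simp)
    have h2 : HasDerivAt (cdfF f) (f x) x := this
    rw [h2.deriv]
  have e2 : (∫ t in a..b, deriv (fun t : ℝ => t) t * cdfF f t) = ∫ t in a..b, cdfF f t := by
    simp
  rw [e1, e2] at key
  linarith

theorem aux_condMean_mul {f : ℝ → ℝ} (hf : IsDensity f) {a b : ℝ} (ha : a ∈ Icc (0:ℝ) 1)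
    (hb : b ∈ Icc (0:ℝ) 1) :
    condMean f a b * (cdfF f b - cdfF f a) = ∫ t in a..b, t * f t := by
  rw [aux_F_sub hf ha hb]
  unfold condMean
  rcases eq_or_ne a b with rfl | hne
  · simp
  · apply div_mul_cancel₀
    rw [← aux_F_sub hf ha hb]
    intro h
    exact hne ((aux_F_strict hf).injOn ha hb (by linarith))

theorem aux_condMean_mem {f : ℝ → ℝ} (hf : IsDensity f) {a b : ℝ} (ha : a ∈ Icc (0:ℝ) 1)
    (hb : b ∈ Icc (0:ℝ) 1) (hab : a < b) : condMean f a b ∈ Icc a b := by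
  have hpos := aux_F_strict hf ha hb hab
  have hm := aux_condMean_mul hf ha hb
  have hfn : ∀ x ∈ Icc a b, 0 ≤ f x := fun x hx => (hf.1 x ⟨ha.1.trans hx.1, hx.2.trans hb.2⟩).le
  have h1 : (∫ t in a..b, a * f t) ≤ ∫ t in a..b, t * f t :=
    intervalIntegral.integral_mono_on hab.le ((aux_fint hf ha hb).const_mul a)
      (aux_tf_int hf ha hb) (fun x hx => mul_le_mul_of_nonneg_right hx.1 (hfn x hx))
  have h2 : (∫ t in a..b, t * f t) ≤ ∫ t in a..b, b * f t :=
    intervalIntegral.integral_mono_on hab.le (aux_tf_int hf ha hb)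
      ((aux_fint hf ha hb).const_mul b) (fun x hx => mul_le_mul_of_nonneg_right hx.2 (hfn x hx))
  rw [intervalIntegral.integral_const_mul, ← aux_F_sub hf ha hb] at h1 h2
  constructor
  · nlinarith
  · nlinarith

/-- The step function of a pooled interval. -/
def aux_step (f : ℝ → ℝ) (a b t : ℝ) : ℝ :=
  if t < condMean f a b then cdfF f a else cdfF f b

theorem aux_step_int (f : ℝ → ℝ) (a b x y : ℝ) :
    IntervalIntegrable (aux_step f a b) volume x y := by
  have hm : Measurable (aux_step f a b) :=
    Measurable.ite measurableSet_Iio measurable_const measurable_const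
  apply (intervalIntegrable_const (c := max |cdfF f a| |cdfF f b|)).mono_fun
    hm.aestronglyMeasurable
  filter_upwards with t
  unfold aux_step
  rw [Real.norm_eq_abs, Real.norm_eq_abs]
  split_ifs
  · exact (le_max_left _ _).trans (le_abs_self _)
  · exact (le_max_right _ _).trans (le_abs_self _)

theorem aux_step_left (f : ℝ → ℝ) (a b x y : ℝ) (hxy : x ≤ y) (hy : y ≤ condMean f a b) :
    (∫ t in x..y, aux_step f a b t) = cdfF f a * (y - x) := by
  have : (∫ t in x..y, aux_step f a b t) = ∫ t in x..y, cdfF f a := by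
    apply intervalIntegral.integral_congr_ae
    have hne : ∀ᵐ t : ℝ, t ≠ y := by simp [ae_iff, measure_singleton]
    filter_upwards [hne] with t ht htm
    rw [uIoc_of_le hxy] at htm
    unfold aux_step
    rw [if_pos]
    exact (lt_of_le_of_ne htm.2 ht).trans_le hy
  rw [this]; simp [mul_comm]

theorem aux_step_right (f : ℝ → ℝ) (a b x y : ℝ) (hxy : x ≤ y) (hx : condMean f a b ≤ x) :
    (∫ t in x..y, aux_step f a b t) = cdfF f b * (y - x) := by
  have : (∫ t in x..y, aux_step f a b t) = ∫ t in x..y, cdfF f b := by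
    apply intervalIntegral.integral_congr
    intro t htm
    rw [uIcc_of_le hxy] at htm
    simp only [aux_step]
    rw [if_neg]
    exact not_lt.2 (hx.trans htm.1)
  rw [this]; simp [mul_comm]

theorem aux_step_full {f : ℝ → ℝ} (hf : IsDensity f) {a b : ℝ} (ha : a ∈ Icc (0:ℝ) 1)
    (hb : b ∈ Icc (0:ℝ) 1) (hab : a ≤ b) :
    (∫ t in a..b, aux_step f a b t) = ∫ t in a..b, cdfF f t := by
  rcases hab.eq_or_lt with rfl | hlt
  · simp
  have hm := aux_condMean_mem hf ha hb hlt
  have h1 := aux_condMean_mul hf ha hb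
  rw [aux_parts hf ha hb, ← intervalIntegral.integral_add_adjacent_intervals
    (aux_step_int f a b a (condMean f a b)) (aux_step_int f a b (condMean f a b) b),
    aux_step_left f a b _ _ hm.1 le_rfl, aux_step_right f a b _ _ hm.2 le_rfl]
  linarith

theorem aux_step_le {f : ℝ → ℝ} (hf : IsDensity f) {a b z : ℝ} (ha : a ∈ Icc (0:ℝ) 1)
    (hb : b ∈ Icc (0:ℝ) 1) (haz : a ≤ z) (hzb : z ≤ b) :
    (∫ t in a..z, aux_step f a b t) ≤ ∫ t in a..z, cdfF f t := by
  have hz : z ∈ Icc (0:ℝ) 1 := ⟨ha.1.trans haz, hzb.trans hb.2⟩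
  have hmono := (aux_F_strict hf).monotoneOn
  rcases le_total z (condMean f a b) with h | h
  · apply intervalIntegral.integral_mono_on_of_le_Ioo haz (aux_step_int _ _ _ _ _)
      (aux_F_int hf ha hz)
    intro t ht
    unfold aux_step
    rw [if_pos (ht.2.trans_le h)]
    exact hmono ha ⟨ha.1.trans ht.1.le, ht.2.le.trans hz.2⟩ ht.1.le
  · have hfull := aux_step_full hf ha hb (haz.trans hzb)
    rw [← intervalIntegral.integral_add_adjacent_intervals
      (aux_step_int f a b a z) (aux_step_int f a b z b),
      ← intervalIntegral.integral_add_adjacent_intervals (aux_F_int hf ha hz)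
        (aux_F_int hf hz hb)] at hfull
    have : (∫ t in z..b, cdfF f t) ≤ ∫ t in z..b, aux_step f a b t := by
      apply intervalIntegral.integral_mono_on hzb (aux_F_int hf hz hb) (aux_step_int _ _ _ _ _)
      intro t ht
      unfold aux_step
      rw [if_neg (not_lt.2 (h.trans ht.1))]
      exact hmono ⟨hz.1.trans ht.1, ht.2.trans hb.2⟩ hb ht.2
    linarith

/-! ### Components -/

theorem aux_comp_bdd {P : Set ℝ} (hP : P ⊆ Icc (0:ℝ) 1) (x : ℝ) :
    BddBelow (connectedComponentIn P x) ∧ BddAbove (connectedComponentIn P x) := by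
  have h := (connectedComponentIn_subset P x).trans hP
  exact ⟨bddBelow_Icc.mono h, bddAbove_Icc.mono h⟩

theorem aux_comp_mem {P : Set ℝ} (hP : P ⊆ Icc (0:ℝ) 1) {x : ℝ} (hx : x ∈ P) :
    compInf P x ∈ Icc (0:ℝ) 1 ∧ compSup P x ∈ Icc (0:ℝ) 1 ∧ compInf P x ≤ x ∧ x ≤ compSup P x := by
  have h := (connectedComponentIn_subset P x).trans hP
  have hb := aux_comp_bdd hP x
  have hxm := mem_connectedComponentIn hx
  have h1 : compInf P x ≤ x := csInf_le hb.1 hxm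
  have h2 : x ≤ compSup P x := le_csSup hb.2 hxm
  refine ⟨⟨le_csInf ⟨x, hxm⟩ fun y hy => (h hy).1, h1.trans (hP hx).2⟩,
    ⟨(hP hx).1.trans h2, csSup_le ⟨x, hxm⟩ fun y hy => (h hy).2⟩, h1, h2⟩

theorem aux_Gp_mem {f : ℝ → ℝ} {P : Set ℝ} {x : ℝ} (hx : x ∈ P) :
    Gp f P x = aux_step f (compInf P x) (compSup P x) x := by
  simp [Gp, aux_step, hx]

theorem aux_Gp_bounds {f : ℝ → ℝ} (hf : IsDensity f) {P : Set ℝ} (hP : P ⊆ Icc (0:ℝ) 1) {x : ℝ}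
    (hx : x ∈ P) : cdfF f (compInf P x) ≤ Gp f P x ∧ Gp f P x ≤ cdfF f (compSup P x) := by
  obtain ⟨h1, h2, h3, h4⟩ := aux_comp_mem hP hx
  have := (aux_F_strict hf).monotoneOn h1 h2 (h3.trans h4)
  rw [aux_Gp_mem hx]
  unfold aux_step
  split_ifs
  · exact ⟨le_rfl, this⟩
  · exact ⟨this, le_rfl⟩

theorem aux_Gp_mono {f : ℝ → ℝ} (hf : IsDensity f) {P : Set ℝ} (hP : P ⊆ Icc (0:ℝ) 1) :
    MonotoneOn (Gp f P) (Icc (0:ℝ) 1) := by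
  intro x hx y hy hxy
  have hmono := (aux_F_strict hf).monotoneOn
  by_cases hs : y ∈ connectedComponentIn P x
  · have hxP : x ∈ P := connectedComponentIn_nonempty_iff.mp ⟨y, hs⟩
    have hyP : y ∈ P := connectedComponentIn_subset _ _ hs
    have he := connectedComponentIn_eq hs
    have e1 : compInf P y = compInf P x := by simp [compInf, he]
    have e2 : compSup P y = compSup P x := by simp [compSup, he]
    obtain ⟨h1, h2, h3, h4⟩ := aux_comp_mem hP hxP
    have hle := hmono h1 h2 (h3.trans h4)
    rw [aux_Gp_mem hxP, aux_Gp_mem hyP, e1, e2]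
    unfold aux_step
    split_ifs <;> linarith
  · -- different components
    have hA : x ∈ P → ∀ z ∈ connectedComponentIn P x, z ≤ y := by
      intro hxP z hz
      by_contra hlt
      push Not at hlt
      exact hs (isPreconnected_connectedComponentIn.ordConnected.out (mem_connectedComponentIn hxP)
        hz ⟨hxy, hlt.le⟩)
    by_cases hxP : x ∈ P <;> by_cases hyP : y ∈ P
    · refine (aux_Gp_bounds hf hP hxP).2.trans (le_trans ?_ (aux_Gp_bounds hf hP hyP).1)
      apply hmono (aux_comp_mem hP hxP).2.1 (aux_comp_mem hP hyP).1
      apply csSup_le ⟨x, mem_connectedComponentIn hxP⟩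
      intro z hz
      apply le_csInf ⟨y, mem_connectedComponentIn hyP⟩
      intro w hw
      by_contra hlt
      push Not at hlt
      have hzy := hA hxP z hz
      have hzm : z ∈ connectedComponentIn P y :=
        isPreconnected_connectedComponentIn.ordConnected.out hw (mem_connectedComponentIn hyP)
          ⟨hlt.le, hzy⟩
      have := (connectedComponentIn_eq hz).trans (connectedComponentIn_eq hzm).symm
      exact hs (this ▸ mem_connectedComponentIn hyP)
    · refine (aux_Gp_bounds hf hP hxP).2.trans ?_
      have : Gp f P y = cdfF f y := by simp [Gp, hyP]
      rw [this]
      exact hmono (aux_comp_mem hP hxP).2.1 hy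
        (csSup_le ⟨x, mem_connectedComponentIn hxP⟩ (hA hxP))
    · refine le_trans ?_ (aux_Gp_bounds hf hP hyP).1
      have : Gp f P x = cdfF f x := by simp [Gp, hxP]
      rw [this]
      apply hmono hx (aux_comp_mem hP hyP).1
      apply le_csInf ⟨y, mem_connectedComponentIn hyP⟩
      intro w hw
      by_contra hlt
      push Not at hlt
      exact hxP (connectedComponentIn_subset _ _
        (isPreconnected_connectedComponentIn.ordConnected.out hw (mem_connectedComponentIn hyP)
          ⟨hlt.le, hxy⟩))
    · simp only [Gp, hxP, hyP, if_false]
      exact hmono hx hy hxy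

theorem aux_Gp_range {f : ℝ → ℝ} (hf : IsDensity f) {P : Set ℝ} (hP : P ⊆ Icc (0:ℝ) 1) {x : ℝ}
    (hx : x ∈ Icc (0:ℝ) 1) : Gp f P x ∈ Icc (0:ℝ) 1 := by
  have hmono := (aux_F_strict hf).monotoneOn
  have hr : ∀ y ∈ Icc (0:ℝ) 1, cdfF f y ∈ Icc (0:ℝ) 1 := by
    intro y hy
    have h0 := hmono (left_mem_Icc.2 zero_le_one) hy hy.1
    have h1 := hmono hy (right_mem_Icc.2 zero_le_one) hy.2
    rw [aux_F_zero] at h0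
    rw [aux_F_one hf] at h1
    exact ⟨h0, h1⟩
  by_cases hxP : x ∈ P
  · have hb := aux_Gp_bounds hf hP hxP
    obtain ⟨h1, h2, h3, h4⟩ := aux_comp_mem hP hxP
    exact ⟨(hr _ h1).1.trans hb.1, hb.2.trans (hr _ h2).2⟩
  · simp only [Gp, hxP, if_false]
    exact hr x hx

theorem aux_Gp_int {f : ℝ → ℝ} (hf : IsDensity f) {P : Set ℝ} (hP : P ⊆ Icc (0:ℝ) 1) {a b : ℝ}
    (ha : a ∈ Icc (0:ℝ) 1) (hb : b ∈ Icc (0:ℝ) 1) : IntervalIntegrable (Gp f P) volume a b := by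
  apply MonotoneOn.intervalIntegrable
  apply (aux_Gp_mono hf hP).mono
  rw [← uIcc_of_le (zero_le_one' ℝ)] at *
  exact uIcc_subset_uIcc ha hb

/-! ### Properties of `Γ` -/

theorem aux_pool_sub {P : Set ℝ} (hP : IsPoolingSet P) : P ⊆ Icc (0:ℝ) 1 := by
  obtain ⟨U, _, rfl⟩ := hP
  exact inter_subset_right

theorem aux_zero_mem : (0:ℝ) ∈ Icc (0:ℝ) 1 := ⟨le_rfl, zero_le_one⟩
theorem aux_one_mem : (1:ℝ) ∈ Icc (0:ℝ) 1 := ⟨zero_le_one, le_rfl⟩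

theorem aux_Gam_sub {f : ℝ → ℝ} (hf : IsDensity f) {P : Set ℝ} (hP : P ⊆ Icc (0:ℝ) 1) {a b : ℝ}
    (ha : a ∈ Icc (0:ℝ) 1) (hb : b ∈ Icc (0:ℝ) 1) :
    Gam f P b - Gam f P a = ∫ t in a..b, Gp f P t :=
  intervalIntegral.integral_interval_sub_left (aux_Gp_int hf hP aux_zero_mem hb)
    (aux_Gp_int hf hP aux_zero_mem ha)

/-- Subgradient inequality. -/
theorem aux_subgrad {f : ℝ → ℝ} (hf : IsDensity f) {P : Set ℝ} (hP : P ⊆ Icc (0:ℝ) 1) {y z : ℝ}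
    (hy : y ∈ Icc (0:ℝ) 1) (hz : z ∈ Icc (0:ℝ) 1) :
    Gam f P y + Gp f P y * (z - y) ≤ Gam f P z := by
  have hmono := aux_Gp_mono hf hP
  rcases le_total y z with h | h
  · have h1 : (∫ t in y..z, Gp f P y) ≤ ∫ t in y..z, Gp f P t := by
      apply intervalIntegral.integral_mono_on h intervalIntegrable_const (aux_Gp_int hf hP hy hz)
      intro t ht
      exact hmono hy ⟨hy.1.trans ht.1, ht.2.trans hz.2⟩ ht.1
    have h2 := aux_Gam_sub hf hP hy hz
    simp only [intervalIntegral.integral_const, smul_eq_mul] at h1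
    nlinarith
  · have h1 : (∫ t in z..y, Gp f P t) ≤ ∫ t in z..y, Gp f P y := by
      apply intervalIntegral.integral_mono_on h (aux_Gp_int hf hP hz hy) intervalIntegrable_const
      intro t ht
      exact hmono ⟨hz.1.trans ht.1, ht.2.trans hy.2⟩ hy ht.2
    have h2 := aux_Gam_sub hf hP hz hy
    simp only [intervalIntegral.integral_const, smul_eq_mul] at h1
    nlinarith

theorem aux_Gam_zero (f : ℝ → ℝ) (P : Set ℝ) : Gam f P 0 = 0 := by simp [Gam]

theorem aux_Gam_nonneg {f : ℝ → ℝ} (hf : IsDensity f) {P : Set ℝ} (hP : P ⊆ Icc (0:ℝ) 1) {z : ℝ}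
    (hz : z ∈ Icc (0:ℝ) 1) : 0 ≤ Gam f P z := by
  have h := aux_subgrad hf hP aux_zero_mem hz
  have h2 := (aux_Gp_range hf hP aux_zero_mem).1
  rw [aux_Gam_zero] at h
  nlinarith [hz.1]

theorem aux_Gam_one {f : ℝ → ℝ} (hf : IsDensity f) {P : Set ℝ} (hP : P ⊆ Icc (0:ℝ) 1) {z : ℝ}
    (hz : z ∈ Icc (0:ℝ) 1) : Gam f P 1 - (1 - z) ≤ Gam f P z := by
  have h := aux_subgrad hf hP aux_one_mem hz
  have h2 := (aux_Gp_range hf hP aux_one_mem).2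
  nlinarith [hz.2]

/-- `Γ_F`, the integral of the cdf. -/
def aux_GF (f : ℝ → ℝ) (x : ℝ) : ℝ := ∫ t in (0:ℝ)..x, cdfF f t

theorem aux_GF_sub {f : ℝ → ℝ} (hf : IsDensity f) {a b : ℝ}
    (ha : a ∈ Icc (0:ℝ) 1) (hb : b ∈ Icc (0:ℝ) 1) :
    aux_GF f b - aux_GF f a = ∫ t in a..b, cdfF f t :=
  intervalIntegral.integral_interval_sub_left (aux_F_int hf aux_zero_mem hb)
    (aux_F_int hf aux_zero_mem ha)

theorem aux_setInt_congr (h : ℝ → ℝ) {S : Set ℝ} {a b : ℝ} (h1 : Ioo a b ⊆ S)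
    (h2 : S ⊆ Icc a b) : (∫ t in S, h t) = ∫ t in Ioo a b, h t := by
  apply setIntegral_congr_set
  have hne1 : ∀ᵐ t : ℝ, t ≠ a := by simp [ae_iff, measure_singleton]
  have hne2 : ∀ᵐ t : ℝ, t ≠ b := by simp [ae_iff, measure_singleton]
  filter_upwards [hne1, hne2] with t ht1 ht2
  apply propext
  constructor
  · intro ht
    have := h2 ht
    exact ⟨lt_of_le_of_ne this.1 (Ne.symm ht1), lt_of_le_of_ne this.2 ht2⟩
  · intro ht
    exact h1 ht

theorem aux_comp_int {f : ℝ → ℝ} (hf : IsDensity f) {P : Set ℝ} (hP : P ⊆ Icc (0:ℝ) 1) {x z : ℝ}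
    (hx : x ∈ P) :
    (∫ t in connectedComponentIn P x ∩ Iic z, (Gp f P t - cdfF f t)) ≤ 0 ∧
    (z = 1 → (∫ t in connectedComponentIn P x ∩ Iic z, (Gp f P t - cdfF f t)) = 0) := by
  set C := connectedComponentIn P x with hC
  set a := compInf P x with ha
  set b := compSup P x with hb
  obtain ⟨hma, hmb, hax, hxb⟩ := aux_comp_mem hP hx
  rw [← ha] at hma hax
  rw [← hb] at hmb hxb
  have hbd := aux_comp_bdd hP x
  have hIoo : Ioo a b ⊆ C :=
    (isConnected_connectedComponentIn_iff.2 hx).Ioo_csInf_csSup_subset hbd.1 hbd.2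
  have hIcc : C ⊆ Icc a b := subset_Icc_csInf_csSup hbd.1 hbd.2
  set w := max a (min z b) with hw
  have haw : a ≤ w := le_max_left _ _
  have hwb : w ≤ b := max_le (hax.trans hxb) (min_le_right _ _)
  have hmw : w ∈ Icc (0:ℝ) 1 := ⟨hma.1.trans haw, hwb.trans hmb.2⟩
  have e1 : (∫ t in C ∩ Iic z, (Gp f P t - cdfF f t)) = ∫ t in Ioo a w, (Gp f P t - cdfF f t) := by
    apply aux_setInt_congr
    · intro t ht
      have : t < min z b := by
        rcases lt_max_iff.1 ht.2 with h | h
        · exact absurd h (not_lt.2 ht.1.le)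
        · exact h
      exact ⟨hIoo ⟨ht.1, this.trans_le (min_le_right _ _)⟩, (this.trans_le (min_le_left _ _)).le⟩
    · intro t ht
      have := hIcc ht.1
      exact ⟨this.1, le_max_of_le_right (le_min ht.2 this.2)⟩
  have e2 : (∫ t in Ioo a w, (Gp f P t - cdfF f t)) =
      ∫ t in Ioo a w, (aux_step f a b t - cdfF f t) := by
    apply setIntegral_congr_fun measurableSet_Ioo
    intro t ht
    have htC : t ∈ C := hIoo ⟨ht.1, ht.2.trans_le hwb⟩
    have htP : t ∈ P := connectedComponentIn_subset _ _ htC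
    have he := connectedComponentIn_eq htC
    have e1 : compInf P t = a := by simp [ha, compInf, he]
    have e2 : compSup P t = b := by simp [hb, compSup, he]
    simp only
    rw [aux_Gp_mem htP, e1, e2]
  have e3 : (∫ t in Ioo a w, (aux_step f a b t - cdfF f t)) =
      (∫ t in a..w, aux_step f a b t) - ∫ t in a..w, cdfF f t := by
    rw [← integral_Ioc_eq_integral_Ioo, ← intervalIntegral.integral_of_le haw,
      intervalIntegral.integral_sub (aux_step_int _ _ _ _ _) (aux_F_int hf hma hmw)]
  rw [e1, e2, e3]
  constructor
  · linarith [aux_step_le hf hma hmb haw hwb]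
  · intro hz
    have : w = b := by
      rw [hw, hz, min_eq_right hmb.2, max_eq_right (hax.trans hxb)]
    rw [this, aux_step_full hf hma hmb (hax.trans hxb), sub_self]

theorem aux_Gam_le {f : ℝ → ℝ} (hf : IsDensity f) {P : Set ℝ} (hPP : IsPoolingSet P) {z : ℝ}
    (hz : z ∈ Icc (0:ℝ) 1) :
    Gam f P z ≤ aux_GF f z ∧ (z = 1 → Gam f P z = aux_GF f z) := by
  have hP := aux_pool_sub hPP
  obtain ⟨U, hU, hPU⟩ := hPP
  have hPmeas : MeasurableSet P := by rw [hPU]; exact hU.measurableSet.inter measurableSet_Icc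
  set S : Set (Set ℝ) := {C | ∃ x ∈ P, C = connectedComponentIn P x} with hS
  have hdis : S.PairwiseDisjoint id := by
    rintro C ⟨x, hx, rfl⟩ D ⟨y, hy, rfl⟩ hne
    rw [Function.onFun, Set.disjoint_left]
    intro t ht1 ht2
    exact hne ((connectedComponentIn_eq ht1).trans (connectedComponentIn_eq ht2).symm)
  have hcount : S.Countable := by
    apply hdis.countable_of_nonempty_interior
    rintro C ⟨x, hx, rfl⟩
    have hxU : x ∈ U := by rw [hPU] at hx; exact hx.1
    have hx01 := hP hx
    obtain ⟨ε, hε, hball⟩ := Metric.isOpen_iff.1 hU x hxU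
    rw [Real.ball_eq_Ioo] at hball
    have hsub : Ioo (x - ε) (x + ε) ∩ Icc (0:ℝ) 1 ⊆ connectedComponentIn P x := by
      apply IsPreconnected.subset_connectedComponentIn
      · exact (ordConnected_Ioo.inter ordConnected_Icc).isPreconnected
      · exact ⟨⟨by linarith, by linarith⟩, hx01⟩
      · rw [hPU]; exact inter_subset_inter_left _ hball
    have hlt : max 0 (x - ε) < min 1 (x + ε) := by
      rw [max_lt_iff, lt_min_iff, lt_min_iff]
      refine ⟨⟨zero_lt_one, ?_⟩, ?_, ?_⟩ <;> linarith [hx01.1, hx01.2]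
    have hsub2 : Ioo (max 0 (x - ε)) (min 1 (x + ε)) ⊆ connectedComponentIn P x := by
      refine Subset.trans ?_ hsub
      intro t ht
      have h1 := max_lt_iff.1 ht.1
      have h2 := lt_min_iff.1 ht.2
      exact ⟨⟨h1.2, h2.2⟩, h1.1.le, h2.1.le⟩
    exact (nonempty_Ioo.2 hlt).mono (interior_maximal hsub2 isOpen_Ioo)
  have : Countable S := hcount.to_subtype
  have hUn : (⋃ C : S, (C : Set ℝ) ∩ Iic z) = P ∩ Iic z := by
    ext t
    simp only [mem_iUnion]
    constructor
    · rintro ⟨⟨C, x, hx, rfl⟩, ht⟩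
      exact ⟨connectedComponentIn_subset _ _ ht.1, ht.2⟩
    · intro ht
      exact ⟨⟨_, t, ht.1, rfl⟩, mem_connectedComponentIn ht.1, ht.2⟩
  have hIntg : IntervalIntegrable (fun t => Gp f P t - cdfF f t) volume 0 z :=
    (aux_Gp_int hf hP aux_zero_mem hz).sub (aux_F_int hf aux_zero_mem hz)
  have hintIcc : IntegrableOn (fun t => Gp f P t - cdfF f t) (Icc 0 z) :=
    (intervalIntegrable_iff_integrableOn_Icc_of_le hz.1).1 hIntg
  have hsub : P ∩ Iic z ⊆ Icc 0 z := fun t ht => ⟨(hP ht.1).1, ht.2⟩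
  have hsum := hasSum_integral_iUnion (μ := volume) (f := fun t => Gp f P t - cdfF f t)
    (s := fun C : S => (C : Set ℝ) ∩ Iic z)
    (by
      rintro ⟨C, x, hx, rfl⟩
      exact (isPreconnected_connectedComponentIn.ordConnected.measurableSet).inter
        measurableSet_Iic)
    (by
      intro C D hne
      have := hdis C.2 D.2 (fun h => hne (Subtype.ext h))
      exact this.mono inter_subset_left inter_subset_left)
    (by rw [hUn]; exact hintIcc.mono_set hsub)
  rw [hUn] at hsum
  have heq : Gam f P z - aux_GF f z = ∫ t in P ∩ Iic z, (Gp f P t - cdfF f t) := by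
    unfold Gam aux_GF
    rw [← intervalIntegral.integral_sub (aux_Gp_int hf hP aux_zero_mem hz)
      (aux_F_int hf aux_zero_mem hz), intervalIntegral.integral_of_le hz.1,
      ← integral_Icc_eq_integral_Ioc]
    apply setIntegral_eq_of_subset_of_forall_sdiff_eq_zero measurableSet_Icc hsub
    intro t ht
    have : t ∉ P := fun h => ht.2 ⟨h, ht.1.2⟩
    simp [Gp, this]
  constructor
  · have : (∫ t in P ∩ Iic z, (Gp f P t - cdfF f t)) ≤ 0 := by
      refine hasSum_le ?_ hsum hasSum_zero
      rintro ⟨C, x, hx, rfl⟩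
      exact (aux_comp_int hf hP hx).1
    linarith
  · intro hz1
    have h0 : (fun C : S => ∫ t in (C : Set ℝ) ∩ Iic z, (Gp f P t - cdfF f t)) = fun _ => 0 := by
      funext ⟨C, x, hx, hCx⟩
      subst hCx
      exact (aux_comp_int hf hP hx).2 hz1
    rw [h0] at hsum
    have := hsum.unique hasSum_zero
    linarith

/-! ### The special pooling sets -/

theorem aux_special_pool {b c : ℝ} (hb : 0 ≤ b) (hbc : b ≤ c) (hc : c ≤ 1) :
    IsPoolingSet (Ico (0:ℝ) b ∪ Ioc c 1) := by
  refine ⟨Iio b ∪ Ioi c, isOpen_Iio.union isOpen_Ioi, ?_⟩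
  ext t
  simp only [mem_union, mem_Ico, mem_Ioc, mem_inter_iff, mem_Iio, mem_Ioi, mem_Icc]
  constructor
  · rintro (h | h)
    · exact ⟨Or.inl h.2, h.1, by linarith [h.2]⟩
    · exact ⟨Or.inr h.1, by linarith [h.1], h.2⟩
  · rintro ⟨h | h, h2⟩
    · exact Or.inl ⟨h2.1, h⟩
    · exact Or.inr ⟨h, h2.2⟩

theorem aux_special_Gp_left (f : ℝ → ℝ) {b c t : ℝ} (hbc : b ≤ c)
    (ht : t ∈ Ico (0:ℝ) b) : Gp f (Ico (0:ℝ) b ∪ Ioc c 1) t = aux_step f 0 b t := by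
  set P := Ico (0:ℝ) b ∪ Ioc c 1 with hP
  have htP : t ∈ P := Or.inl ht
  have hcomp : connectedComponentIn P t = Ico 0 b := by
    apply Subset.antisymm
    · intro s hs
      rcases connectedComponentIn_subset _ _ hs with h | h
      · exact h
      · exfalso
        have hbm : b ∈ P := connectedComponentIn_subset P t
          (isPreconnected_connectedComponentIn.ordConnected.out (mem_connectedComponentIn htP)
            hs ⟨ht.2.le, hbc.trans h.1.le⟩)
        rcases hbm with h | h
        · exact lt_irrefl _ h.2
        · exact absurd h.1 (not_lt.2 hbc)
    · exact ordConnected_Ico.isPreconnected.subset_connectedComponentIn ht subset_union_left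
  have hlt : 0 < b := ht.1.trans_lt ht.2
  rw [aux_Gp_mem htP]
  unfold compInf compSup
  rw [hcomp, csInf_Ico hlt, csSup_Ico hlt]

theorem aux_special_Gp_right (f : ℝ → ℝ) {b c t : ℝ} (hbc : b ≤ c)
    (ht : t ∈ Ioc c 1) : Gp f (Ico (0:ℝ) b ∪ Ioc c 1) t = aux_step f c 1 t := by
  set P := Ico (0:ℝ) b ∪ Ioc c 1 with hP
  have htP : t ∈ P := Or.inr ht
  have hcomp : connectedComponentIn P t = Ioc c 1 := by
    apply Subset.antisymm
    · intro s hs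
      rcases connectedComponentIn_subset _ _ hs with h | h
      · exfalso
        have hbm : c ∈ P := connectedComponentIn_subset P t
          (isPreconnected_connectedComponentIn.ordConnected.out hs (mem_connectedComponentIn htP)
            ⟨h.2.le.trans hbc, ht.1.le⟩)
        rcases hbm with h | h
        · exact absurd h.2 (not_lt.2 hbc)
        · exact lt_irrefl _ h.1
      · exact h
    · exact ordConnected_Ioc.isPreconnected.subset_connectedComponentIn ht subset_union_right
  have hlt : c < 1 := ht.1.trans_le ht.2
  rw [aux_Gp_mem htP]
  unfold compInf compSup
  rw [hcomp, csInf_Ioc hlt, csSup_Ioc hlt]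

theorem aux_special_Gp_mid (f : ℝ → ℝ) {b c t : ℝ}
    (ht : t ∈ Icc b c) : Gp f (Ico (0:ℝ) b ∪ Ioc c 1) t = cdfF f t := by
  have : t ∉ Ico (0:ℝ) b ∪ Ioc c 1 := by
    rintro (h | h)
    · exact absurd h.2 (not_lt.2 ht.1)
    · exact absurd h.1 (not_lt.2 ht.2)
  simp [Gp, this]

theorem aux_sp_int_left {f : ℝ → ℝ} (_hf : IsDensity f) {b c : ℝ} (_hb : 0 ≤ b) (hbc : b ≤ c)
    (_hc : c ≤ 1) {z : ℝ} (hz0 : 0 ≤ z) (hz : z ≤ b) :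
    Gam f (Ico (0:ℝ) b ∪ Ioc c 1) z = ∫ t in (0:ℝ)..z, aux_step f 0 b t := by
  unfold Gam
  apply intervalIntegral.integral_congr_ae
  have hne : ∀ᵐ t : ℝ, t ≠ z := by simp [ae_iff, measure_singleton]
  filter_upwards [hne] with t ht htm
  rw [uIoc_of_le hz0] at htm
  exact aux_special_Gp_left f hbc ⟨htm.1.le, (lt_of_le_of_ne htm.2 ht).trans_le hz⟩

theorem aux_sp_A {f : ℝ → ℝ} (hf : IsDensity f) {b c : ℝ} (hb : 0 ≤ b) (hbc : b ≤ c)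
    (hc : c ≤ 1) {z : ℝ} (hz0 : 0 ≤ z) (hz : z ≤ b) (hm : z ≤ condMean f 0 b) :
    Gam f (Ico (0:ℝ) b ∪ Ioc c 1) z = 0 := by
  rw [aux_sp_int_left hf hb hbc hc hz0 hz, aux_step_left f 0 b 0 z hz0 hm, aux_F_zero, zero_mul]

theorem aux_sp_b {f : ℝ → ℝ} (hf : IsDensity f) {b c : ℝ} (hb : 0 ≤ b) (hbc : b ≤ c)
    (hc : c ≤ 1) : Gam f (Ico (0:ℝ) b ∪ Ioc c 1) b = aux_GF f b := by
  rw [aux_sp_int_left hf hb hbc hc hb le_rfl,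
    aux_step_full hf aux_zero_mem ⟨hb, hbc.trans hc⟩ hb, aux_GF]

theorem aux_sp_B {f : ℝ → ℝ} (hf : IsDensity f) {b c : ℝ} (hb : 0 ≤ b) (hbc : b ≤ c)
    (hc : c ≤ 1) {z : ℝ} (hz0 : 0 ≤ z) (hz : z ≤ b) (hm : condMean f 0 b ≤ z) :
    Gam f (Ico (0:ℝ) b ∪ Ioc c 1) z = aux_GF f b - cdfF f b * (b - z) := by
  have h1 := aux_sp_b hf hb hbc hc
  rw [aux_sp_int_left hf hb hbc hc hb le_rfl] at h1
  rw [aux_sp_int_left hf hb hbc hc hz0 hz, ← h1, ← aux_step_right f 0 b z b hz hm,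
    ← intervalIntegral.integral_add_adjacent_intervals (aux_step_int f 0 b 0 z)
      (aux_step_int f 0 b z b)]
  ring

theorem aux_sp_C {f : ℝ → ℝ} (hf : IsDensity f) {b c : ℝ} (hb : 0 ≤ b) (hbc : b ≤ c)
    (hc : c ≤ 1) {z : ℝ} (hz0 : b ≤ z) (hz : z ≤ c) :
    Gam f (Ico (0:ℝ) b ∪ Ioc c 1) z = aux_GF f z := by
  have hP := aux_pool_sub (aux_special_pool hb hbc hc)
  have hbm : b ∈ Icc (0:ℝ) 1 := ⟨hb, hbc.trans hc⟩
  have hzm : z ∈ Icc (0:ℝ) 1 := ⟨hb.trans hz0, hz.trans hc⟩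
  have h1 := aux_Gam_sub hf hP hbm hzm
  have h2 := aux_GF_sub hf hbm hzm
  have h3 := aux_sp_b hf hb hbc hc
  have h4 : (∫ t in b..z, Gp f (Ico (0:ℝ) b ∪ Ioc c 1) t) = ∫ t in b..z, cdfF f t := by
    apply intervalIntegral.integral_congr
    intro t ht
    rw [uIcc_of_le hz0] at ht
    exact aux_special_Gp_mid f ⟨ht.1, ht.2.trans hz⟩
  linarith

theorem aux_sp_int_right {f : ℝ → ℝ} (hf : IsDensity f) {b c : ℝ} (hb : 0 ≤ b) (hbc : b ≤ c)
    (hc : c ≤ 1) {x z : ℝ} (hx : c ≤ x) (hxz : x ≤ z) (hz : z ≤ 1) :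
    Gam f (Ico (0:ℝ) b ∪ Ioc c 1) z - Gam f (Ico (0:ℝ) b ∪ Ioc c 1) x =
      ∫ t in x..z, aux_step f c 1 t := by
  have hP := aux_pool_sub (aux_special_pool hb hbc hc)
  have hc0 := hb.trans hbc
  rw [aux_Gam_sub hf hP ⟨by linarith, by linarith⟩ ⟨by linarith, by linarith⟩]
  apply intervalIntegral.integral_congr_ae
  filter_upwards with t htm
  rw [uIoc_of_le hxz] at htm
  exact aux_special_Gp_right f hbc ⟨hx.trans_lt htm.1, htm.2.trans hz⟩

theorem aux_sp_D {f : ℝ → ℝ} (hf : IsDensity f) {b c : ℝ} (hb : 0 ≤ b) (hbc : b ≤ c)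
    (hc : c ≤ 1) {z : ℝ} (hz0 : c ≤ z) (hz : z ≤ 1) (hm : z ≤ condMean f c 1) :
    Gam f (Ico (0:ℝ) b ∪ Ioc c 1) z = aux_GF f c + cdfF f c * (z - c) := by
  have h1 := aux_sp_C hf hb hbc hc hbc le_rfl
  have h2 := aux_sp_int_right hf hb hbc hc le_rfl hz0 hz
  rw [aux_step_left f c 1 c z hz0 hm] at h2
  linarith

theorem aux_sp_E {f : ℝ → ℝ} (hf : IsDensity f) {b c : ℝ} (hb : 0 ≤ b) (hbc : b ≤ c)
    (hc : c ≤ 1) {z : ℝ} (hz0 : c ≤ z) (hz : z ≤ 1) (hm : condMean f c 1 ≤ z) :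
    Gam f (Ico (0:ℝ) b ∪ Ioc c 1) z = aux_GF f 1 - (1 - z) := by
  have h1 := (aux_Gam_le hf (aux_special_pool hb hbc hc) aux_one_mem).2 rfl
  have h2 := aux_sp_int_right hf hb hbc hc hz0 hz le_rfl
  rw [aux_step_right f c 1 z 1 hz hm, aux_F_one hf] at h2
  linarith


/-! ### Comparison with `P_*` -/

theorem aux_T_cont {f : ℝ → ℝ} (hf : IsDensity f) :
    ContinuousOn (fun x => ∫ t in (0:ℝ)..x, t * f t) (Icc (0:ℝ) 1) := by
  have h := intervalIntegral.continuousOn_primitive_interval' (f := fun t => t * f t)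
    (μ := volume) (aux_tf_int hf aux_zero_mem aux_one_mem) (a := 0) (by simp)
  rwa [uIcc_of_le (zero_le_one' ℝ)] at h

theorem aux_mean_left {f : ℝ → ℝ} (hf : IsDensity f) {θL yL b : ℝ} (hθL : θL ∈ Ioo (0:ℝ) 1)
    (hb : b ∈ Icc θL 1) (h2 : Gam f (Ico (0:ℝ) b) θL = yL)
    (h3 : ∀ θ ∈ Icc θL (1:ℝ), Gam f (Ico (0:ℝ) θ) θL = yL → b ≤ θ) :
    condMean f 0 b ≤ θL := by
  by_contra hlt
  push Not at hlt
  have hb0 : 0 < b := hθL.1.trans_le hb.1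
  have hb01 : b ∈ Icc (0:ℝ) 1 := ⟨hb0.le, hb.2⟩
  have hmem := aux_condMean_mem hf aux_zero_mem hb01 hb0
  have hLb : θL < b := hlt.trans_le hmem.2
  have hG : ∀ c, θL ≤ c → c ≤ 1 → θL < condMean f 0 c → Gam f (Ico (0:ℝ) c) θL = 0 := by
    intro c hc hc1 hm
    have := aux_sp_A hf (hθL.1.le.trans hc) hc1 le_rfl hθL.1.le hc hm.le
    simpa using this
  have hy : yL = 0 := by rw [← h2]; exact hG b hb.1 hb.2 hlt
  have hφ : ContinuousOn (fun x => (∫ t in (0:ℝ)..x, t * f t) - θL * cdfF f x) (Icc (0:ℝ) 1) :=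
    (aux_T_cont hf).sub (continuousOn_const.mul (aux_F_cont hf))
  have hφb : 0 < (∫ t in (0:ℝ)..b, t * f t) - θL * cdfF f b := by
    have h := aux_condMean_mul hf aux_zero_mem hb01
    have hF := aux_F_strict hf aux_zero_mem hb01 hb0
    rw [aux_F_zero] at h hF
    nlinarith
  have hw : ContinuousWithinAt _ (Ioo θL b) b := (hφ b hb01).mono
    (fun t ht => ⟨(hθL.1.trans ht.1).le, (ht.2.trans_le hb.2).le⟩)
  have hev := hw.eventually (lt_mem_nhds hφb)
  have : (nhdsWithin b (Ioo θL b)).NeBot := by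
    rw [← mem_closure_iff_nhdsWithin_neBot, closure_Ioo hLb.ne]
    exact ⟨hLb.le, le_rfl⟩
  obtain ⟨c, hc, hcm⟩ := (hev.and self_mem_nhdsWithin).exists
  have hc0 : 0 < c := hθL.1.trans hcm.1
  have hc01 : c ∈ Icc (0:ℝ) 1 := ⟨hc0.le, (hcm.2.trans_le hb.2).le⟩
  have hmc : θL < condMean f 0 c := by
    have h := aux_condMean_mul hf aux_zero_mem hc01
    have hF := aux_F_strict hf aux_zero_mem hc01 hc0
    rw [aux_F_zero] at h hF
    by_contra hcon
    push Not at hcon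
    nlinarith
  have := h3 c ⟨hcm.1.le, hc01.2⟩ (by rw [hy]; exact hG c hcm.1.le hc01.2 hmc)
  exact absurd hcm.2 (not_lt.2 this)

theorem aux_mean_right {f : ℝ → ℝ} (hf : IsDensity f) {θH yH c : ℝ} (hθH : θH ∈ Ioo (0:ℝ) 1)
    (hc : c ∈ Icc 0 θH) (h2 : Gam f (Ioc c 1) θH = yH)
    (h3 : ∀ θ ∈ Icc (0:ℝ) θH, Gam f (Ioc θ 1) θH = yH → θ ≤ c) :
    θH ≤ condMean f c 1 := by
  by_contra hlt
  push Not at hlt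
  have hc1 : c < 1 := hc.2.trans_lt hθH.2
  have hc01 : c ∈ Icc (0:ℝ) 1 := ⟨hc.1, hc1.le⟩
  have hmem := aux_condMean_mem hf hc01 aux_one_mem hc1
  have hcH : c < θH := hmem.1.trans_lt hlt
  have hG : ∀ x, 0 ≤ x → x ≤ θH → condMean f x 1 < θH →
      Gam f (Ioc x 1) θH = aux_GF f 1 - (1 - θH) := by
    intro x hx0 hx hm
    have := aux_sp_E hf le_rfl hx0 (hx.trans hθH.2.le) hx hθH.2.le hm.le
    simpa using this
  have hy : yH = aux_GF f 1 - (1 - θH) := by rw [← h2]; exact hG c hc.1 hc.2 hlt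
  have hT : ∀ x ∈ Icc (0:ℝ) 1, (∫ t in x..1, t * f t) =
      (∫ t in (0:ℝ)..1, t * f t) - ∫ t in (0:ℝ)..x, t * f t := fun x hx =>
    (intervalIntegral.integral_interval_sub_left (aux_tf_int hf aux_zero_mem aux_one_mem)
      (aux_tf_int hf aux_zero_mem hx)).symm
  have hφ : ContinuousOn (fun x => ((∫ t in (0:ℝ)..1, t * f t) - ∫ t in (0:ℝ)..x, t * f t)
      - θH * (1 - cdfF f x)) (Icc (0:ℝ) 1) :=
    (continuousOn_const.sub (aux_T_cont hf)).sub
      (continuousOn_const.mul (continuousOn_const.sub (aux_F_cont hf)))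
  have hφb : ((∫ t in (0:ℝ)..1, t * f t) - ∫ t in (0:ℝ)..c, t * f t)
      - θH * (1 - cdfF f c) < 0 := by
    have h := aux_condMean_mul hf hc01 aux_one_mem
    have hF := aux_F_strict hf hc01 aux_one_mem hc1
    rw [hT c hc01] at h
    rw [aux_F_one hf] at h hF
    nlinarith
  have hw : ContinuousWithinAt _ (Ioo c θH) c := (hφ c hc01).mono
    (fun t ht => ⟨(hc.1.trans ht.1.le), (ht.2.trans hθH.2).le⟩)
  have hev := hw.eventually (gt_mem_nhds hφb)
  have : (nhdsWithin c (Ioo c θH)).NeBot := by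
    rw [← mem_closure_iff_nhdsWithin_neBot, closure_Ioo hcH.ne]
    exact ⟨le_rfl, hcH.le⟩
  obtain ⟨x, hx, hxm⟩ := (hev.and self_mem_nhdsWithin).exists
  have hx1 : x < 1 := hxm.2.trans hθH.2
  have hx01 : x ∈ Icc (0:ℝ) 1 := ⟨hc.1.trans hxm.1.le, hx1.le⟩
  have hmx : condMean f x 1 < θH := by
    have h := aux_condMean_mul hf hx01 aux_one_mem
    have hF := aux_F_strict hf hx01 aux_one_mem hx1
    rw [hT x hx01] at h
    rw [aux_F_one hf] at h hF
    by_contra hcon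
    push Not at hcon
    nlinarith
  have := h3 x ⟨hx01.1, hxm.2.le⟩ (by rw [hy]; exact hG x hx01.1 hxm.2.le hmx)
  exact absurd hxm.1 (not_lt.2 this)

theorem aux_GF_tangent {f : ℝ → ℝ} (hf : IsDensity f) {a s : ℝ} (ha : a ∈ Icc (0:ℝ) 1)
    (hs : s ∈ Icc (0:ℝ) 1) : aux_GF f s ≤ aux_GF f a + cdfF f s * (s - a) := by
  have hmono := (aux_F_strict hf).monotoneOn
  have h := aux_GF_sub hf ha hs
  rcases le_total a s with hle | hle
  · have h1 : (∫ t in a..s, cdfF f t) ≤ ∫ t in a..s, cdfF f s := by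
      apply intervalIntegral.integral_mono_on hle (aux_F_int hf ha hs) intervalIntegrable_const
      intro t ht
      exact hmono ⟨ha.1.trans ht.1, ht.2.trans hs.2⟩ hs ht.2
    simp only [intervalIntegral.integral_const, smul_eq_mul] at h1
    nlinarith
  · have h1 : (∫ t in s..a, cdfF f s) ≤ ∫ t in s..a, cdfF f t := by
      apply intervalIntegral.integral_mono_on hle intervalIntegrable_const (aux_F_int hf hs ha)
      intro t ht
      exact hmono hs ⟨hs.1.trans ht.1, ht.2.trans ha.2⟩ ht.1
    simp only [intervalIntegral.integral_const, smul_eq_mul] at h1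
    rw [intervalIntegral.integral_symm] at h
    nlinarith

/-- Chord inequality (convexity of `Γ_P`). -/
theorem aux_chord {f : ℝ → ℝ} (hf : IsDensity f) {P : Set ℝ} (hP : P ⊆ Icc (0:ℝ) 1) {x y z : ℝ}
    (hx : x ∈ Icc (0:ℝ) 1) (hz : z ∈ Icc (0:ℝ) 1) (hxy : x ≤ y) (hyz : y ≤ z) :
    (z - x) * Gam f P y ≤ (z - y) * Gam f P x + (y - x) * Gam f P z := by
  have hy : y ∈ Icc (0:ℝ) 1 := ⟨hx.1.trans hxy, hyz.trans hz.2⟩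
  have h1 := aux_subgrad hf hP hy hx
  have h2 := aux_subgrad hf hP hy hz
  nlinarith [mul_le_mul_of_nonneg_left h1 (sub_nonneg.2 hyz),
    mul_le_mul_of_nonneg_left h2 (sub_nonneg.2 hxy)]

/-- left comparison of slopes -/
theorem aux_slope_left {f : ℝ → ℝ} (hf : IsDensity f) {P : Set ℝ} (hPP : IsPoolingSet P)
    {θL b : ℝ} (h0 : 0 ≤ θL) (hLb : θL ≤ b) (hb : b < 1)
    (hv : Gam f P θL = aux_GF f b - cdfF f b * (b - θL)) : Gp f P θL ≤ cdfF f b := by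
  have hP := aux_pool_sub hPP
  have hL01 : θL ∈ Icc (0:ℝ) 1 := ⟨h0, hLb.trans hb.le⟩
  have hb01 : b ∈ Icc (0:ℝ) 1 := ⟨h0.trans hLb, hb.le⟩
  rcases hLb.eq_or_lt with heq | hlt
  · subst heq
    have hw : ContinuousWithinAt (cdfF f) (Ioo θL 1) θL := (aux_F_cont hf θL hL01).mono
      (fun t ht => ⟨h0.trans ht.1.le, ht.2.le⟩)
    have : (nhdsWithin θL (Ioo θL 1)).NeBot := by
      rw [← mem_closure_iff_nhdsWithin_neBot, closure_Ioo hb.ne]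
      exact ⟨le_rfl, hb.le⟩
    refine ge_of_tendsto hw ?_
    filter_upwards [self_mem_nhdsWithin] with s hs
    have hs01 : s ∈ Icc (0:ℝ) 1 := ⟨h0.trans hs.1.le, hs.2.le⟩
    have h1 := aux_subgrad hf hP hL01 hs01
    have h2 := (aux_Gam_le hf hPP hs01).1
    have h3 := aux_GF_tangent hf hL01 hs01
    have h4 : Gp f P θL * (s - θL) ≤ cdfF f s * (s - θL) := by linarith
    exact le_of_mul_le_mul_right h4 (sub_pos.2 hs.1)
  · have h1 := aux_subgrad hf hP hL01 hb01
    have h2 := (aux_Gam_le hf hPP hb01).1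
    have h4 : Gp f P θL * (b - θL) ≤ cdfF f b * (b - θL) := by linarith
    exact le_of_mul_le_mul_right h4 (sub_pos.2 hlt)

theorem aux_slope_right {f : ℝ → ℝ} (hf : IsDensity f) {P : Set ℝ} (hPP : IsPoolingSet P)
    {θH c : ℝ} (h1 : θH ≤ 1) (hcH : c ≤ θH) (hc : 0 < c)
    (hv : Gam f P θH = aux_GF f c + cdfF f c * (θH - c)) : cdfF f c ≤ Gp f P θH := by
  have hP := aux_pool_sub hPP
  have hH01 : θH ∈ Icc (0:ℝ) 1 := ⟨hc.le.trans hcH, h1⟩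
  have hc01 : c ∈ Icc (0:ℝ) 1 := ⟨hc.le, hcH.trans h1⟩
  rcases hcH.eq_or_lt with heq | hlt
  · subst heq
    have hw : ContinuousWithinAt (cdfF f) (Ioo 0 c) c := (aux_F_cont hf c hc01).mono
      (fun t ht => ⟨ht.1.le, ht.2.le.trans h1⟩)
    have : (nhdsWithin c (Ioo 0 c)).NeBot := by
      rw [← mem_closure_iff_nhdsWithin_neBot, closure_Ioo hc.ne]
      exact ⟨hc.le, le_rfl⟩
    refine le_of_tendsto hw ?_
    filter_upwards [self_mem_nhdsWithin] with s hs
    have hs01 : s ∈ Icc (0:ℝ) 1 := ⟨hs.1.le, hs.2.le.trans h1⟩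
    have h1 := aux_subgrad hf hP hH01 hs01
    have h2 := (aux_Gam_le hf hPP hs01).1
    have h3 := aux_GF_tangent hf hH01 hs01
    have h4 : cdfF f s * (c - s) ≤ Gp f P c * (c - s) := by linarith
    exact le_of_mul_le_mul_right h4 (sub_pos.2 hs.2)
  · have h1 := aux_subgrad hf hP hH01 hc01
    have h2 := (aux_Gam_le hf hPP hc01).1
    have h4 : cdfF f c * (θH - c) ≤ Gp f P θH * (θH - c) := by linarith
    exact le_of_mul_le_mul_right h4 (sub_pos.2 hlt)

theorem aux_Gam_cont {f : ℝ → ℝ} (hf : IsDensity f) {P : Set ℝ} (hP : P ⊆ Icc (0:ℝ) 1) :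
    ContinuousOn (Gam f P) (Icc (0:ℝ) 1) := by
  have h := intervalIntegral.continuousOn_primitive_interval' (f := Gp f P)
    (μ := volume) (aux_Gp_int hf hP aux_zero_mem aux_one_mem) (a := 0) (by simp)
  rwa [uIcc_of_le (zero_le_one' ℝ)] at h

/-- If the two `Γ` agree on `[0,1]` they agree everywhere. -/
theorem aux_Gam_ext {f : ℝ → ℝ} (hf : IsDensity f) {P Q : Set ℝ} (hP : P ⊆ Icc (0:ℝ) 1)
    (hQ : Q ⊆ Icc (0:ℝ) 1) (h : EqOn (Gam f P) (Gam f Q) (Icc (0:ℝ) 1)) :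
    Gam f P = Gam f Q := by
  have hout : ∀ t, t ∉ Icc (0:ℝ) 1 → Gp f P t = Gp f Q t := by
    intro t ht
    have h1 : t ∉ P := fun h => ht (hP h)
    have h2 : t ∉ Q := fun h => ht (hQ h)
    simp [Gp, h1, h2]
  funext x
  by_cases hx : x ∈ Icc (0:ℝ) 1
  · exact h hx
  rcases lt_or_ge x 0 with hx0 | hx0
  · unfold Gam
    apply intervalIntegral.integral_congr_ae
    have hne : ∀ᵐ t : ℝ, t ≠ 0 := by simp [ae_iff, measure_singleton]
    filter_upwards [hne] with t ht htm
    rw [uIoc_of_ge hx0.le] at htm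
    exact hout t (fun h => ht (le_antisymm htm.2 h.1))
  · have hx1 : 1 < x := by
      by_contra hcon
      exact hx ⟨hx0, not_lt.1 hcon⟩
    have heq : EqOn (Gp f P) (Gp f Q) (uIoc 1 x) := by
      intro t ht
      rw [uIoc_of_le hx1.le] at ht
      exact hout t (fun h => absurd ht.1 (not_lt.2 h.2))
    have h1 := h aux_one_mem
    have iP := aux_Gp_int hf hP aux_zero_mem aux_one_mem
    have iQ := aux_Gp_int hf hQ aux_zero_mem aux_one_mem
    by_cases hi : IntervalIntegrable (Gp f P) volume 1 x
    · have hi' : IntervalIntegrable (Gp f Q) volume 1 x := hi.congr heq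
      unfold Gam at h1 ⊢
      rw [← intervalIntegral.integral_add_adjacent_intervals iP hi,
        ← intervalIntegral.integral_add_adjacent_intervals iQ hi', h1]
      congr 1
      apply intervalIntegral.integral_congr_ae
      filter_upwards with t ht
      exact heq ht
    · have hi' : ¬ IntervalIntegrable (Gp f Q) volume 1 x := fun h' => hi (h'.congr heq.symm)
      unfold Gam
      rw [intervalIntegral.integral_undef (fun h' => hi (iP.symm.trans h')),
        intervalIntegral.integral_undef (fun h' => hi' (iQ.symm.trans h'))]

/-- constrained problem. Given `y^L, y^H` achievable by some
pooling set, let `θ_*^L` be the smallest `θ ∈ [θ^L,1]` with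
`Γ_{[0,θ)}(θ^L) = y^L` and `θ_*^H` the largest `θ ∈ [0,θ^H]` with
`Γ_{(θ,1]}(θ^H) = y^H`. If `θ_*^L ≤ θ_*^H`, then `P_* = [0,θ_*^L) ∪ (θ_*^H,1]`
satisfies both constraints and uniquely maximizes `∫_0^1 u''(θ)Γ_P(θ)dθ` among
pooling sets satisfying the constraints: every such `P` with `Γ_P ≠ Γ_{P_*}`
yields a strictly smaller value. -/
theorem constrained_unique_optimum (f : ℝ → ℝ) (hf : IsDensity f)
    (u u' u'' : ℝ → ℝ) (hu : C1AC u u' u'')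
    (θL θH : ℝ) (hθL : θL ∈ Ioo (0:ℝ) 1) (hθH : θH ∈ Ioo (0:ℝ) 1) (hLH : θL < θH)
    (hneg1 : ∀ θ ∈ Ico (0:ℝ) θL, u'' θ < 0)
    (hpos : ∀ θ ∈ Ioo θL θH, 0 < u'' θ)
    (hneg2 : ∀ θ ∈ Ioc θH (1:ℝ), u'' θ < 0)
    (yL yH : ℝ)
    (hex : ∃ P : Set ℝ, IsPoolingSet P ∧ Gam f P θL = yL ∧ Gam f P θH = yH)
    (θsL : ℝ) (hθsL1 : θsL ∈ Icc θL 1) (hθsL2 : Gam f (Ico (0:ℝ) θsL) θL = yL)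
    (hθsL3 : ∀ θ ∈ Icc θL (1:ℝ), Gam f (Ico (0:ℝ) θ) θL = yL → θsL ≤ θ)
    (θsH : ℝ) (hθsH1 : θsH ∈ Icc (0:ℝ) θH) (hθsH2 : Gam f (Ioc θsH 1) θH = yH)
    (hθsH3 : ∀ θ ∈ Icc (0:ℝ) θH, Gam f (Ioc θ 1) θH = yH → θ ≤ θsH)
    (hle : θsL ≤ θsH) :
    IsPoolingSet (Ico (0:ℝ) θsL ∪ Ioc θsH 1) ∧
    Gam f (Ico (0:ℝ) θsL ∪ Ioc θsH 1) θL = yL ∧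
    Gam f (Ico (0:ℝ) θsL ∪ Ioc θsH 1) θH = yH ∧
    ∀ P : Set ℝ, IsPoolingSet P → Gam f P θL = yL → Gam f P θH = yH →
      Gam f P ≠ Gam f (Ico (0:ℝ) θsL ∪ Ioc θsH 1) →
      (∫ θ in (0:ℝ)..1, u'' θ * Gam f P θ) <
        ∫ θ in (0:ℝ)..1, u'' θ * Gam f (Ico (0:ℝ) θsL ∪ Ioc θsH 1) θ := by
  have hθL01 : θL ∈ Icc (0:ℝ) 1 := ⟨hθL.1.le, hθL.2.le⟩
  have hθH01 : θH ∈ Icc (0:ℝ) 1 := ⟨hθH.1.le, hθH.2.le⟩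
  have hmL := aux_mean_left hf hθL hθsL1 hθsL2 hθsL3
  have hmH := aux_mean_right hf hθH hθsH1 hθsH2 hθsH3
  have hb0 : 0 < θsL := hθL.1.trans_le hθsL1.1
  have hc0 : 0 < θsH := hb0.trans_le hle
  have hc1 : θsH < 1 := hθsH1.2.trans_lt hθH.2
  have hb1 : θsL < 1 := hle.trans_lt hc1
  have hbm : θsL ∈ Icc (0:ℝ) 1 := ⟨hb0.le, hb1.le⟩
  have hcm : θsH ∈ Icc (0:ℝ) 1 := ⟨hc0.le, hc1.le⟩
  have hpool := aux_special_pool hb0.le hle hc1.le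
  have hyL : yL = aux_GF f θsL - cdfF f θsL * (θsL - θL) := by
    have := aux_sp_B hf hb0.le hb1.le le_rfl hθL.1.le hθsL1.1 hmL
    rw [← hθsL2]
    simpa using this
  have hyH : yH = aux_GF f θsH + cdfF f θsH * (θH - θsH) := by
    have := aux_sp_D hf le_rfl hc0.le hc1.le hθsH1.2 hθH.2.le hmH
    rw [← hθsH2]
    simpa using this
  refine ⟨hpool, ?_, ?_, ?_⟩
  · rw [hyL]; exact aux_sp_B hf hb0.le hle hc1.le hθL.1.le hθsL1.1 hmL
  · rw [hyH]; exact aux_sp_D hf hb0.le hle hc1.le hθsH1.2 hθH.2.le hmH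
  intro P hPP hPL hPH hne
  have hP := aux_pool_sub hPP
  have hQ := aux_pool_sub hpool
  have hgL := aux_slope_left hf hPP hθL.1.le hθsL1.1 hb1 (hPL.trans hyL)
  have hgH := aux_slope_right hf hPP hθH.2.le hθsH1.2 hc0 (hPH.trans hyH)
  -- pointwise comparison
  have cmp1 : ∀ z ∈ Icc (0:ℝ) θL, Gam f (Ico (0:ℝ) θsL ∪ Ioc θsH 1) z ≤ Gam f P z := by
    intro z hz
    have hz01 : z ∈ Icc (0:ℝ) 1 := ⟨hz.1, hz.2.trans hθL.2.le⟩
    rcases le_total z (condMean f 0 θsL) with h | h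
    · rw [aux_sp_A hf hb0.le hle hc1.le hz.1 (hz.2.trans hθsL1.1) h]
      exact aux_Gam_nonneg hf hP hz01
    · rw [aux_sp_B hf hb0.le hle hc1.le hz.1 (hz.2.trans hθsL1.1) h]
      have := aux_subgrad hf hP hθL01 hz01
      rw [hPL, hyL] at this
      nlinarith [mul_nonneg (sub_nonneg.2 hgL) (sub_nonneg.2 hz.2)]
  have cmp3 : ∀ z ∈ Icc θH (1:ℝ), Gam f (Ico (0:ℝ) θsL ∪ Ioc θsH 1) z ≤ Gam f P z := by
    intro z hz
    have hz01 : z ∈ Icc (0:ℝ) 1 := ⟨hθH.1.le.trans hz.1, hz.2⟩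
    rcases le_total z (condMean f θsH 1) with h | h
    · rw [aux_sp_D hf hb0.le hle hc1.le (hθsH1.2.trans hz.1) hz.2 h]
      have := aux_subgrad hf hP hθH01 hz01
      rw [hPH, hyH] at this
      nlinarith [mul_nonneg (sub_nonneg.2 hgH) (sub_nonneg.2 hz.1)]
    · rw [aux_sp_E hf hb0.le hle hc1.le (hθsH1.2.trans hz.1) hz.2 h]
      rw [← (aux_Gam_le hf hPP aux_one_mem).2 rfl]
      exact aux_Gam_one hf hP hz01
  have cmp2 : ∀ z ∈ Icc θL θH, Gam f P z ≤ Gam f (Ico (0:ℝ) θsL ∪ Ioc θsH 1) z := by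
    intro z hz
    have hz01 : z ∈ Icc (0:ℝ) 1 := ⟨hθL.1.le.trans hz.1, hz.2.trans hθH.2.le⟩
    rcases le_total z θsL with h | h
    · rw [aux_sp_B hf hb0.le hle hc1.le hz01.1 h (hmL.trans hz.1)]
      rcases hθsL1.1.eq_or_lt with he | hlt
      · have : z = θsL := le_antisymm h (he ▸ hz.1)
        subst this
        have := (aux_Gam_le hf hPP hz01).1
        linarith
      · have h1 := aux_chord hf hP hθL01 hbm hz.1 h
        have h2 := (aux_Gam_le hf hPP hbm).1
        rw [hPL, hyL] at h1
        have h3 := mul_le_mul_of_nonneg_left h2 (sub_nonneg.2 hz.1)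
        have h4 : (θsL - θL) * Gam f P z ≤
            (θsL - θL) * (aux_GF f θsL - cdfF f θsL * (θsL - z)) := by nlinarith
        exact le_of_mul_le_mul_left h4 (sub_pos.2 hlt)
    rcases le_total z θsH with h' | h'
    · rw [aux_sp_C hf hb0.le hle hc1.le h h']
      exact (aux_Gam_le hf hPP hz01).1
    · rw [aux_sp_D hf hb0.le hle hc1.le h' hz01.2 (hz.2.trans hmH)]
      rcases hθsH1.2.eq_or_lt with he | hlt
      · have : z = θsH := le_antisymm (he ▸ hz.2) h'
        subst this
        have := (aux_Gam_le hf hPP hz01).1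
        linarith
      · have h1 := aux_chord hf hP hcm hθH01 h' hz.2
        have h2 := (aux_Gam_le hf hPP hcm).1
        rw [hPH, hyH] at h1
        have h3 := mul_le_mul_of_nonneg_left h2 (sub_nonneg.2 hz.2)
        have h4 : (θH - θsH) * Gam f P z ≤
            (θH - θsH) * (aux_GF f θsH + cdfF f θsH * (z - θsH)) := by nlinarith
        exact le_of_mul_le_mul_left h4 (sub_pos.2 hlt)
  -- integration
  set Q := Ico (0:ℝ) θsL ∪ Ioc θsH 1 with hQdef
  have hu2 : IntervalIntegrable u'' volume 0 1 :=
    (intervalIntegrable_iff_integrableOn_Icc_of_le zero_le_one).2 hu.2.2.1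
  have icP : IntervalIntegrable (fun θ => u'' θ * Gam f P θ) volume 0 1 :=
    hu2.mul_continuousOn (by
      rw [uIcc_of_le (zero_le_one' ℝ)]; exact aux_Gam_cont hf hP)
  have icQ : IntervalIntegrable (fun θ => u'' θ * Gam f Q θ) volume 0 1 :=
    hu2.mul_continuousOn (by
      rw [uIcc_of_le (zero_le_one' ℝ)]; exact aux_Gam_cont hf hQ)
  have hneL : ∀ᵐ t ∂(volume.restrict (Ioc (0:ℝ) 1)), t ≠ θL :=
    ae_restrict_of_ae (by simp [ae_iff, measure_singleton])
  have hneH : ∀ᵐ t ∂(volume.restrict (Ioc (0:ℝ) 1)), t ≠ θH :=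
    ae_restrict_of_ae (by simp [ae_iff, measure_singleton])
  have hsgn : ∀ᵐ t ∂(volume.restrict (Ioc (0:ℝ) 1)),
      0 ≤ u'' t * Gam f Q t - u'' t * Gam f P t ∧ u'' t ≠ 0 := by
    filter_upwards [hneL, hneH, ae_restrict_mem measurableSet_Ioc] with t h1 h2 ht
    rcases lt_or_gt_of_ne h1 with h | h
    · have a1 := hneg1 t ⟨ht.1.le, h⟩
      have a2 := cmp1 t ⟨ht.1.le, h.le⟩
      exact ⟨by nlinarith, a1.ne⟩
    rcases lt_or_gt_of_ne h2 with h' | h'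
    · have a1 := hpos t ⟨h, h'⟩
      have a2 := cmp2 t ⟨h.le, h'.le⟩
      exact ⟨by nlinarith, a1.ne'⟩
    · have a1 := hneg2 t ⟨h', ht.2⟩
      have a2 := cmp3 t ⟨h'.le, ht.2⟩
      exact ⟨by nlinarith, a1.ne⟩
  have hnn : 0 ≤ᵐ[volume.restrict (Ioc (0:ℝ) 1)]
      (fun t => u'' t * Gam f Q t - u'' t * Gam f P t) := by
    filter_upwards [hsgn] with t ht using ht.1
  have hge : 0 ≤ ∫ t in (0:ℝ)..1, (u'' t * Gam f Q t - u'' t * Gam f P t) := by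
    rw [intervalIntegral.integral_of_le zero_le_one]
    exact integral_nonneg_of_ae hnn
  have hsplit : (∫ t in (0:ℝ)..1, (u'' t * Gam f Q t - u'' t * Gam f P t)) =
      (∫ t in (0:ℝ)..1, u'' t * Gam f Q t) - ∫ t in (0:ℝ)..1, u'' t * Gam f P t :=
    intervalIntegral.integral_sub icQ icP
  by_contra hcon
  push Not at hcon
  have hz : (∫ t in (0:ℝ)..1, (u'' t * Gam f Q t - u'' t * Gam f P t)) = 0 := by linarith
  rw [intervalIntegral.integral_eq_zero_iff_of_le_of_nonneg_ae zero_le_one hnn (icQ.sub icP)] at hz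
  have hae : Gam f P =ᵐ[volume.restrict (Ioc (0:ℝ) 1)] Gam f Q := by
    filter_upwards [hz, hsgn] with t h1 h2
    have h3 : u'' t * (Gam f Q t - Gam f P t) = 0 := by
      have : u'' t * Gam f Q t - u'' t * Gam f P t = 0 := h1
      linarith
    rcases mul_eq_zero.1 h3 with h | h
    · exact absurd h h2.2
    · linarith
  rw [restrict_Ioc_eq_restrict_Icc] at hae
  exact hne (aux_Gam_ext hf hP hQ
    (Measure.eqOn_Icc_of_ae_eq volume zero_ne_one hae (aux_Gam_cont hf hP) (aux_Gam_cont hf hQ)))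
end
end

section
/- Let u_S : ℝ × [0,1] → ℝ be twice continuously differentiable with ∂²u_S/∂d∂θ (d,θ) > 0 for all d ∈ ℝ and θ ∈ [0,1]. Let q : [0,1] → ℝ and p : [0,1] → ℝ be arbitrary functions and define U(θ) = u_S(q(θ),θ) − p(θ). Then the incentive-compatibility condition — U(θ) ≥ u_S(q(θ̂),θ) − p(θ̂) for all θ, θ̂ ∈ [0,1] — holds if and only if q is nondecreasing on [0,1] and U satisfies the envelope formula U(θ) = U(0) + ∫_0^θ (∂u_S/∂θ)(q(t),t) dt for all θ ∈ [0,1]. -/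
open Set

noncomputable section

lemma aux_hasDeriv (uS : ℝ → ℝ → ℝ)
    (hC2 : ContDiff ℝ 2 (fun p : ℝ × ℝ => uS p.1 p.2)) (d t : ℝ) :
    HasDerivAt (fun s => uS d s)
      (fderiv ℝ (fun p : ℝ × ℝ => uS p.1 p.2) (d, t) (0, 1)) t := by
  have h1 : HasFDerivAt (fun p : ℝ × ℝ => uS p.1 p.2)
      (fderiv ℝ (fun p : ℝ × ℝ => uS p.1 p.2) (d, t)) (d, t) :=
    ((hC2.differentiable (by norm_num)) (d, t)).hasFDerivAt
  have h2 : HasDerivAt (fun s : ℝ => (d, s)) ((0 : ℝ), (1 : ℝ)) t :=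
    (hasDerivAt_const t d).prodMk (hasDerivAt_id t)
  exact HasFDerivAt.comp_hasDerivAt (f := fun s : ℝ => (d, s)) t h1 h2

lemma aux_g (uS : ℝ → ℝ → ℝ)
    (hC2 : ContDiff ℝ 2 (fun p : ℝ × ℝ => uS p.1 p.2)) :
    ContDiff ℝ 1 (fun p : ℝ × ℝ => deriv (fun s => uS p.1 s) p.2) := by
  have : (fun p : ℝ × ℝ => deriv (fun s => uS p.1 s) p.2) =
      fun p => fderiv ℝ (fun p : ℝ × ℝ => uS p.1 p.2) p (0, 1) := by
    funext p
    exact (aux_hasDeriv uS hC2 p.1 p.2).deriv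
  rw [this]
  exact (hC2.fderiv_right (m := 1) (by norm_num)).clm_apply contDiff_const

lemma aux_ftc (uS : ℝ → ℝ → ℝ)
    (hC2 : ContDiff ℝ 2 (fun p : ℝ × ℝ => uS p.1 p.2)) (d a b : ℝ) :
    Continuous (fun t => deriv (fun s => uS d s) t) ∧
    ∫ t in a..b, deriv (fun s => uS d s) t = uS d b - uS d a := by
  have hc : Continuous (fun t => deriv (fun s => uS d s) t) :=
    (aux_g uS hC2).continuous.comp (f := fun t : ℝ => (d, t)) (by fun_prop)
  refine ⟨hc, ?_⟩
  exact intervalIntegral.integral_eq_sub_of_hasDerivAt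
    (fun t _ => (aux_hasDeriv uS hC2 d t).differentiableAt.hasDerivAt)
    (hc.intervalIntegrable _ _)

lemma aux_key (uS : ℝ → ℝ → ℝ)
    (hC2 : ContDiff ℝ 2 (fun p : ℝ × ℝ => uS p.1 p.2))
    (hg : ∀ θ ∈ Icc (0:ℝ) 1, StrictMono (fun d => deriv (fun s => uS d s) θ))
    (q : ℝ → ℝ) (hq : MonotoneOn q (Icc (0:ℝ) 1)) :
    (∀ a ∈ Icc (0:ℝ) 1, ∀ b ∈ Icc (0:ℝ) 1,
      IntervalIntegrable (fun t => deriv (fun s => uS (q t) s) t) MeasureTheory.volume a b) ∧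
    ∀ a ∈ Icc (0:ℝ) 1, ∀ b ∈ Icc (0:ℝ) 1, a ≤ b →
      uS (q a) b - uS (q a) a ≤ ∫ t in a..b, deriv (fun s => uS (q t) s) t ∧
      ∫ t in a..b, deriv (fun s => uS (q t) s) t ≤ uS (q b) b - uS (q b) a := by
  have hint01 : MeasureTheory.IntegrableOn (fun t => deriv (fun s => uS (q t) s) t)
      (Icc (0:ℝ) 1) := by
    have hQ : Monotone (fun t : ℝ => q (projIcc (0:ℝ) 1 zero_le_one t)) := fun x y hxy =>
      hq (projIcc 0 1 zero_le_one x).2 (projIcc 0 1 zero_le_one y).2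
        (monotone_projIcc zero_le_one hxy)
    have hm : Measurable
        (fun t : ℝ => deriv (fun s => uS (q (projIcc (0:ℝ) 1 zero_le_one t)) s) t) :=
      (aux_g uS hC2).continuous.measurable.comp
        (f := fun t : ℝ => (q (projIcc (0:ℝ) 1 zero_le_one t), t))
        (hQ.measurable.prodMk measurable_id)
    have hi0 : MeasureTheory.IntegrableOn (fun t => deriv (fun s => uS (q 0) s) t)
      (Icc (0:ℝ) 1) := (aux_ftc uS hC2 (q 0) 0 1).1.integrableOn_Icc
    have hi1 : MeasureTheory.IntegrableOn (fun t => deriv (fun s => uS (q 1) s) t)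
      (Icc (0:ℝ) 1) := (aux_ftc uS hC2 (q 1) 0 1).1.integrableOn_Icc
    have hiQ : MeasureTheory.IntegrableOn
        (fun t : ℝ => deriv (fun s => uS (q (projIcc (0:ℝ) 1 zero_le_one t)) s) t)
        (Icc (0:ℝ) 1) := by
      refine MeasureTheory.Integrable.mono (hi0.norm.add hi1.norm) hm.aestronglyMeasurable ?_
      refine (MeasureTheory.ae_restrict_mem measurableSet_Icc).mono fun t ht => ?_
      have e1 := (hg t ht).monotone (hq (left_mem_Icc.2 zero_le_one)
        (projIcc (0:ℝ) 1 zero_le_one t).2 (projIcc (0:ℝ) 1 zero_le_one t).2.1)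
      have e2 := (hg t ht).monotone (hq (projIcc (0:ℝ) 1 zero_le_one t).2
        (right_mem_Icc.2 zero_le_one) (projIcc (0:ℝ) 1 zero_le_one t).2.2)
      simp only [Pi.add_apply, Real.norm_eq_abs] at e1 e2 ⊢
      grind
    refine hiQ.congr_fun (fun t ht => ?_) measurableSet_Icc
    simp only [projIcc_of_mem zero_le_one ht]
  have hint : ∀ a ∈ Icc (0:ℝ) 1, ∀ b ∈ Icc (0:ℝ) 1,
      IntervalIntegrable (fun t => deriv (fun s => uS (q t) s) t) MeasureTheory.volume a b := by
    intro a ha b hb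
    rw [intervalIntegrable_iff]
    refine hint01.mono_set (uIoc_subset_uIcc.trans (uIcc_subset_Icc ha hb))
  refine ⟨hint, fun a ha b hb hab => ⟨?_, ?_⟩⟩
  · rw [← (aux_ftc uS hC2 (q a) a b).2]
    refine intervalIntegral.integral_mono_on hab
      ((aux_ftc uS hC2 (q a) a b).1.intervalIntegrable _ _) (hint a ha b hb) fun t ht => ?_
    have ht' : t ∈ Icc (0:ℝ) 1 := ⟨ha.1.trans ht.1, ht.2.trans hb.2⟩
    exact (hg t ht').monotone (hq ha ht' ht.1)
  · rw [← (aux_ftc uS hC2 (q b) a b).2]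
    refine intervalIntegral.integral_mono_on hab (hint a ha b hb)
      ((aux_ftc uS hC2 (q b) a b).1.intervalIntegrable _ _) fun t ht => ?_
    have ht' : t ∈ Icc (0:ℝ) 1 := ⟨ha.1.trans ht.1, ht.2.trans hb.2⟩
    exact (hg t ht').monotone (hq ht' hb ht.2)

lemma aux_const (D q : ℝ → ℝ) (L : ℝ)
    (h : ∀ a ∈ Icc (0:ℝ) 1, ∀ b ∈ Icc (0:ℝ) 1, a ≤ b →
      |D b - D a| ≤ L * (q b - q a) * (b - a)) (θ : ℝ) (hθ : θ ∈ Icc (0:ℝ) 1) :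
    D θ = D 0 := by
  have key : ∀ n : ℕ, |D θ - D 0| ≤ L * (q θ - q 0) * θ * (1 / ((n : ℝ) + 1)) := by
    intro n
    have hn : (0:ℝ) < (n:ℝ) + 1 := by positivity
    have mem : ∀ k : ℕ, k ≤ n + 1 → θ * (k / ((n:ℝ) + 1)) ∈ Icc (0:ℝ) 1 := by
      intro k hk
      have hk' : (k:ℝ) ≤ n + 1 := by exact_mod_cast hk
      have h0 : (0:ℝ) ≤ k / ((n:ℝ) + 1) := by positivity
      have h1 : k / ((n:ℝ) + 1) ≤ 1 := (div_le_one hn).2 hk'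
      exact ⟨mul_nonneg hθ.1 h0, mul_le_one₀ hθ.2 h0 h1⟩
    have ind : ∀ k : ℕ, k ≤ n + 1 → |D (θ * (k / ((n:ℝ) + 1))) - D 0| ≤
        L * (q (θ * (k / ((n:ℝ) + 1))) - q 0) * (θ * (1 / ((n:ℝ) + 1))) := by
      intro k
      induction k with
      | zero => intro _; simp
      | succ k ih =>
        intro hk
        have e := ih (by omega)
        have hdiff : θ * ((k + 1 : ℕ) / ((n:ℝ) + 1)) - θ * (k / ((n:ℝ) + 1))
            = θ * (1 / ((n:ℝ) + 1)) := by push_cast; ring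
        have hpos : 0 ≤ θ * (1 / ((n:ℝ) + 1)) := mul_nonneg hθ.1 (by positivity)
        have e2 := h _ (mem k (by omega)) _ (mem (k+1) hk) (by linarith)
        rw [hdiff] at e2
        have e3 := abs_sub_le (D (θ * ((k + 1 : ℕ) / ((n:ℝ) + 1)))) (D (θ * (k / ((n:ℝ) + 1))))
          (D 0)
        linarith
    have := ind (n + 1) le_rfl
    have e : θ * (((n + 1 : ℕ) : ℝ) / ((n:ℝ) + 1)) = θ := by
      push_cast; field_simp
    rw [e] at this
    linarith
  have lim := (tendsto_one_div_add_atTop_nhds_zero_nat (𝕜 := ℝ)).const_mul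
    (L * (q θ - q 0) * θ)
  rw [mul_zero] at lim
  have h0 : |D θ - D 0| ≤ 0 := ge_of_tendsto' lim key
  exact sub_eq_zero.1 (abs_nonpos_iff.1 h0)

/-- for a twice continuously differentiable `u_S` with strictly
positive cross partial `∂²u_S/∂d∂θ` on `ℝ × [0,1]`, an allocation `q` with
payments `p` is incentive compatible iff `q` is nondecreasing on `[0,1]` and
the envelope (revenue-equivalence) formula holds. -/
theorem ic_iff_monotone_and_envelope (uS : ℝ → ℝ → ℝ)
    (hC2 : ContDiff ℝ 2 (fun p : ℝ × ℝ => uS p.1 p.2))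
    (hcross : ∀ d : ℝ, ∀ θ ∈ Icc (0:ℝ) 1,
      0 < deriv (fun d' => deriv (fun t => uS d' t) θ) d)
    (q p : ℝ → ℝ) :
    (∀ θ ∈ Icc (0:ℝ) 1, ∀ θ' ∈ Icc (0:ℝ) 1,
        uS (q θ') θ - p θ' ≤ uS (q θ) θ - p θ)
      ↔ (MonotoneOn q (Icc (0:ℝ) 1) ∧
        ∀ θ ∈ Icc (0:ℝ) 1,
          uS (q θ) θ - p θ = (uS (q 0) 0 - p 0) +
            ∫ t in (0:ℝ)..θ, deriv (fun s => uS (q t) s) t) := by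
  have hg : ∀ θ ∈ Icc (0:ℝ) 1, StrictMono (fun d => deriv (fun s => uS d s) θ) :=
    fun θ hθ => strictMono_of_deriv_pos fun d => hcross d θ hθ
  have h0 : (0:ℝ) ∈ Icc (0:ℝ) 1 := left_mem_Icc.2 zero_le_one
  have h1 : (1:ℝ) ∈ Icc (0:ℝ) 1 := right_mem_Icc.2 zero_le_one
  constructor
  · intro hIC
    have hq : MonotoneOn q (Icc (0:ℝ) 1) := by
      intro a ha b hb hab
      by_contra! hlt
      have hab' : a < b := lt_of_le_of_ne hab (by rintro rfl; exact lt_irrefl _ hlt)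
      have e1 := hIC a ha b hb
      have e2 := hIC b hb a ha
      have e3 : ∫ t in a..b, deriv (fun s => uS (q b) s) t <
          ∫ t in a..b, deriv (fun s => uS (q a) s) t := by
        refine intervalIntegral.integral_lt_integral_of_continuousOn_of_le_of_exists_lt hab'
          (aux_ftc uS hC2 _ 0 1).1.continuousOn (aux_ftc uS hC2 _ 0 1).1.continuousOn
          (fun t ht => ?_) ⟨a, left_mem_Icc.2 hab, hg a ha hlt⟩
        exact (hg t ⟨ha.1.trans ht.1.le, ht.2.trans hb.2⟩ hlt).le
      rw [(aux_ftc uS hC2 _ a b).2, (aux_ftc uS hC2 _ a b).2] at e3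
      linarith
    refine ⟨hq, ?_⟩
    obtain ⟨hint, hbd⟩ := aux_key uS hC2 hg q hq
    obtain ⟨K, hK⟩ : ∃ K, LipschitzOnWith K
        (fun p : ℝ × ℝ => deriv (fun s => uS p.1 s) p.2) (Icc (q 0) (q 1) ×ˢ Icc (0:ℝ) 1) :=
      (aux_g uS hC2).contDiffOn.exists_lipschitzOnWith (by norm_num)
        ((convex_Icc _ _).prod (convex_Icc _ _)) (isCompact_Icc.prod isCompact_Icc)
    intro θ hθ
    have := aux_const (fun θ => uS (q θ) θ - p θ - ∫ t in (0:ℝ)..θ, deriv (fun s => uS (q t) s) t)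
      q K ?_ θ hθ
    · simp only [intervalIntegral.integral_same] at this
      linarith
    · intro a ha b hb hab
      have e1 := hIC a ha b hb
      have e2 := hIC b hb a ha
      obtain ⟨e3, e4⟩ := hbd a ha b hb hab
      have e5 := intervalIntegral.integral_add_adjacent_intervals (hint 0 h0 a ha) (hint a ha b hb)
      have e6 : (∫ t in a..b, deriv (fun s => uS (q b) s) t) ≤
          ∫ t in a..b, (deriv (fun s => uS (q a) s) t + K * (q b - q a)) := by
        refine intervalIntegral.integral_mono_on hab
          ((aux_ftc uS hC2 _ 0 1).1.intervalIntegrable _ _)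
          (((aux_ftc uS hC2 _ 0 1).1.add continuous_const).intervalIntegrable _ _) fun t ht => ?_
        have ht' : t ∈ Icc (0:ℝ) 1 := ⟨ha.1.trans ht.1, ht.2.trans hb.2⟩
        have := hK.dist_le_mul (q b, t) ⟨⟨hq h0 hb hb.1, hq hb h1 hb.2⟩, ht'⟩
          (q a, t) ⟨⟨hq h0 ha ha.1, hq ha h1 ha.2⟩, ht'⟩
        rw [Prod.dist_eq, dist_self, max_eq_left dist_nonneg, Real.dist_eq, Real.dist_eq,
          abs_of_nonneg (sub_nonneg.2 (hq ha hb hab))] at this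
        have := (le_abs_self _).trans this
        simp only at this
        linarith
      rw [intervalIntegral.integral_add ((aux_ftc uS hC2 _ 0 1).1.intervalIntegrable _ _)
        (continuous_const.intervalIntegrable _ _), intervalIntegral.integral_const, smul_eq_mul,
        (aux_ftc uS hC2 _ a b).2, (aux_ftc uS hC2 _ a b).2] at e6
      rw [abs_le]
      constructor <;> linarith
  · rintro ⟨hq, henv⟩ θ hθ θ' hθ'
    obtain ⟨hint, hbd⟩ := aux_key uS hC2 hg q hq
    have e1 := henv θ hθ
    have e2 := henv θ' hθ'
    rcases le_total θ θ' with h | h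
    · have e3 := hbd θ hθ θ' hθ' h
      have e5 := intervalIntegral.integral_add_adjacent_intervals (hint 0 h0 θ hθ)
        (hint θ hθ θ' hθ')
      linarith [e3.2]
    · have e3 := hbd θ' hθ' θ hθ h
      have e5 := intervalIntegral.integral_add_adjacent_intervals (hint 0 h0 θ' hθ')
        (hint θ' hθ' θ hθ)
      linarith [e3.1]
end
end

section
/- Let u_R : ℝ × [0,1] → ℝ be twice continuously differentiable with ∂²u_R/∂d²(d,m) ≤ −κ for some κ > 0 and ∂²u_R/∂d∂m(d,m) > 0 for all d ∈ ℝ, m ∈ [0,1], and suppose for each m ∈ [0,1] there exists ρ_R(m) ∈ ℝ with ∂u_R/∂d(ρ_R(m),m) = 0. Fix L ≥ 0 and define w_R(d,m) = u_R(ρ_R(m),m) − u_R(d,m) and D(m) = {d ∈ ℝ : w_R(d,m) ≤ L}. Then for each m, D(m) is a nonempty compact interval [ρ_-(m), ρ_+(m)] whose endpoints satisfy w_R(ρ_±(m),m) = L when ρ_-(m) < ρ_+(m), and both ρ_- and ρ_+ are nondecreasing functions of m on [0,1]. -/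
open Set

noncomputable section

/-- Properties of a single strictly concave section. -/
theorem section_aux (f : ℝ → ℝ) (hf : Differentiable ℝ f) (κ : ℝ) (hκ : 0 < κ)
    (hc : ∀ d, deriv (fun d' => deriv f d') d ≤ -κ) (r : ℝ) (hr : deriv f r = 0)
    (d : ℝ) : κ / 2 * (d - r) ^ 2 ≤ f r - f d := by
  have hd : ∀ x, DifferentiableAt ℝ (deriv f) x := fun x => by
    by_contra h
    have h1 := hc x
    have h2 : deriv (fun d' => deriv f d') x = 0 := deriv_zero_of_not_differentiableAt h
    linarith
  have hgd : ∀ x, HasDerivAt (fun x => deriv f x + κ * (x - r)) (deriv (deriv f) x + κ) x := by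
    intro x
    have := (hd x).hasDerivAt.add (((hasDerivAt_id x).sub_const r).const_mul κ)
    refine this.congr_deriv ?_
    simp
  have hanti : Antitone (fun x => deriv f x + κ * (x - r)) := by
    apply antitone_of_deriv_nonpos (fun x => (hgd x).differentiableAt)
    intro x
    rw [(hgd x).deriv]
    have h1 : deriv (deriv f) x ≤ -κ := hc x
    linarith
  have hG : ∀ x, HasDerivAt (fun x => f x + κ / 2 * (x - r) ^ 2) (deriv f x + κ * (x - r)) x := by
    intro x
    have := (hf x).hasDerivAt.add ((((hasDerivAt_id x).sub_const r).pow 2).const_mul (κ / 2))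
    refine this.congr_deriv ?_
    simp
    ring
  have hGc : Continuous (fun x => f x + κ / 2 * (x - r) ^ 2) :=
    continuous_iff_continuousAt.2 fun x => (hG x).continuousAt
  rcases le_total d r with h | h
  · have hm : MonotoneOn (fun x => f x + κ / 2 * (x - r) ^ 2) (Iic r) := by
      apply monotoneOn_of_deriv_nonneg (convex_Iic r) hGc.continuousOn
        (fun x _ => (hG x).differentiableAt.differentiableWithinAt)
      intro x hx
      rw [interior_Iic] at hx
      rw [(hG x).deriv]
      have := hanti (le_of_lt hx)
      simp only [hr] at this
      linarith
    have := hm h (mem_Iic.2 le_rfl) h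
    simp only [sub_self] at this
    linarith
  · have hm : AntitoneOn (fun x => f x + κ / 2 * (x - r) ^ 2) (Ici r) := by
      apply antitoneOn_of_deriv_nonpos (convex_Ici r) hGc.continuousOn
        (fun x _ => (hG x).differentiableAt.differentiableWithinAt)
      intro x hx
      rw [interior_Ici] at hx
      rw [(hG x).deriv]
      have := hanti (le_of_lt hx)
      simp only [hr] at this
      linarith
    have := hm (mem_Ici.2 le_rfl) h h
    simp only [sub_self] at this
    linarith

/-- for each `m ∈ [0,1]`, the set
`D(m) = {d : w_R(d,m) ≤ L}` is a nonempty compact interval `[ρ₋(m), ρ₊(m)]`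
whose endpoints satisfy `w_R(ρ±(m),m) = L` when `ρ₋(m) < ρ₊(m)`, and both
`ρ₋` and `ρ₊` are nondecreasing on `[0,1]`. -/
theorem enforceable_set_interval_monotone (uR : ℝ → ℝ → ℝ)
    (hC2 : ContDiff ℝ 2 (fun p : ℝ × ℝ => uR p.1 p.2))
    (κ : ℝ) (hκ : 0 < κ)
    (hconc : ∀ d : ℝ, ∀ m ∈ Icc (0:ℝ) 1,
      deriv (fun d' => deriv (fun d'' => uR d'' m) d') d ≤ -κ)
    (hcross : ∀ d : ℝ, ∀ m ∈ Icc (0:ℝ) 1,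
      0 < deriv (fun m' => deriv (fun d' => uR d' m') d) m)
    (ρR : ℝ → ℝ)
    (hρR : ∀ m ∈ Icc (0:ℝ) 1, deriv (fun d => uR d m) (ρR m) = 0)
    (L : ℝ) (hL : 0 ≤ L) :
    ∃ ρm ρp : ℝ → ℝ,
      (∀ m ∈ Icc (0:ℝ) 1,
        ρm m ≤ ρp m ∧
        {d : ℝ | uR (ρR m) m - uR d m ≤ L} = Icc (ρm m) (ρp m) ∧
        (ρm m < ρp m →
          uR (ρR m) m - uR (ρm m) m = L ∧ uR (ρR m) m - uR (ρp m) m = L)) ∧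
      MonotoneOn ρm (Icc (0:ℝ) 1) ∧ MonotoneOn ρp (Icc (0:ℝ) 1) := by
  have hdiff : ∀ m, Differentiable ℝ (fun d => uR d m) := fun m => by
    have h1 : Differentiable ℝ (fun p : ℝ × ℝ => uR p.1 p.2) := hC2.differentiable (by norm_num)
    have h2 : Differentiable ℝ (fun d : ℝ => ((d, m) : ℝ × ℝ)) := by fun_prop
    exact h1.comp h2
  have hanti : ∀ m ∈ Icc (0:ℝ) 1, StrictAnti (fun d => deriv (fun d' => uR d' m) d) := by
    intro m hm
    apply strictAnti_of_deriv_neg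
    intro x
    linarith [hconc x m hm]
  have hmono : ∀ d, MonotoneOn (fun m => deriv (fun d' => uR d' m) d) (Icc 0 1) := by
    intro d
    have hd : ∀ m ∈ Icc (0:ℝ) 1, DifferentiableAt ℝ (fun m => deriv (fun d' => uR d' m) d) m :=
      fun m hm => differentiableAt_of_deriv_ne_zero (hcross d m hm).ne'
    apply monotoneOn_of_deriv_nonneg (convex_Icc 0 1)
      (fun m hm => (hd m hm).continuousAt.continuousWithinAt)
      (fun m hm => (hd m (interior_subset hm)).differentiableWithinAt)
    intro m hm
    exact (hcross d m (interior_subset hm)).le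
  have hw : ∀ m ∈ Icc (0:ℝ) 1, ∀ d, κ / 2 * (d - ρR m) ^ 2 ≤ uR (ρR m) m - uR d m := by
    intro m hm d
    exact section_aux (fun d => uR d m) (hdiff m) κ hκ (fun d => hconc d m hm) _ (hρR m hm) d
  have hmax : ∀ m ∈ Icc (0:ℝ) 1, ∀ d, uR d m ≤ uR (ρR m) m := by
    intro m hm d
    have : 0 ≤ κ / 2 * (d - ρR m) ^ 2 := by positivity
    linarith [hw m hm d]
  have hID : ∀ m₁ ∈ Icc (0:ℝ) 1, ∀ m₂ ∈ Icc (0:ℝ) 1, m₁ ≤ m₂ → ∀ a b, a ≤ b →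
      uR a m₂ - uR a m₁ ≤ uR b m₂ - uR b m₁ := by
    intro m₁ h₁ m₂ h₂ h a b hab
    have : Monotone (fun d => uR d m₂ - uR d m₁) := by
      apply monotone_of_deriv_nonneg ((hdiff m₂).sub (hdiff m₁))
      intro x
      have e : deriv (fun d => uR d m₂ - uR d m₁) x = _ :=
        ((hdiff m₂ x).hasDerivAt.sub (hdiff m₁ x).hasDerivAt).deriv
      change 0 ≤ deriv (fun d => uR d m₂ - uR d m₁) x
      rw [e]
      have := hmono x h₁ h₂ h
      simp only at this
      linarith
    exact this hab
  have hρmono : MonotoneOn ρR (Icc 0 1) := by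
    intro m₁ h₁ m₂ h₂ h
    have h3 := hmono (ρR m₁) h₁ h₂ h
    simp only [hρR m₁ h₁] at h3
    rw [← hρR m₂ h₂] at h3
    exact (hanti m₂ h₂).le_iff_ge.1 h3
  let D : ℝ → Set ℝ := fun m => {d : ℝ | uR (ρR m) m - uR d m ≤ L}
  have hDc : ∀ m ∈ Icc (0:ℝ) 1, IsCompact (D m) := by
    intro m hm
    have hcl : IsClosed (D m) :=
      isClosed_le (continuous_const.sub (hdiff m).continuous) continuous_const
    have hsub : D m ⊆ Icc (ρR m - (2 * L / κ + 1)) (ρR m + (2 * L / κ + 1)) := by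
      intro d hd
      have h1 : κ / 2 * (d - ρR m) ^ 2 ≤ L := (hw m hm d).trans hd
      have h2 : (d - ρR m) ^ 2 ≤ 2 * L / κ := by
        rw [le_div_iff₀ hκ]; linarith
      have h0 : 0 ≤ 2 * L / κ := by positivity
      have h3 : |d - ρR m| ≤ 2 * L / κ + 1 := by
        refine abs_le_of_sq_le_sq ?_ (by linarith)
        nlinarith
      rw [abs_le] at h3
      constructor <;> linarith [h3.1, h3.2]
    exact isCompact_Icc.of_isClosed_subset hcl hsub
  have hρD : ∀ m, ρR m ∈ D m := fun m => by simp [D, hL]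
  have hord : ∀ m ∈ Icc (0:ℝ) 1, (D m).OrdConnected := by
    intro m hm
    have hcv : ConcaveOn ℝ univ (fun d => uR d m) :=
      (hanti m hm).antitone.concaveOn_univ_of_deriv (hdiff m)
    have := (hcv.convex_ge (uR (ρR m) m - L)).ordConnected
    have e : D m = {x | x ∈ univ ∧ uR (ρR m) m - L ≤ uR x m} := by
      apply Set.ext
      intro d
      simp only [D, mem_ofPred_eq, mem_univ, true_and]
      constructor <;> intro h <;> linarith
    rw [e]
    exact this
  have hInf : ∀ m ∈ Icc (0:ℝ) 1, sInf (D m) ∈ D m := fun m hm => (hDc m hm).sInf_mem ⟨_, hρD m⟩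
  have hSup : ∀ m ∈ Icc (0:ℝ) 1, sSup (D m) ∈ D m := fun m hm => (hDc m hm).sSup_mem ⟨_, hρD m⟩
  have hle : ∀ m ∈ Icc (0:ℝ) 1, ∀ d ∈ D m, sInf (D m) ≤ d ∧ d ≤ sSup (D m) := fun m hm d hd =>
    ⟨csInf_le (hDc m hm).bddBelow hd, le_csSup (hDc m hm).bddAbove hd⟩
  have hnear : ∀ m, ∀ x, uR (ρR m) m - uR x m < L → ∃ ε > 0, x - ε ∈ D m ∧ x + ε ∈ D m := by
    intro m x hx
    have ho : IsOpen {d : ℝ | uR (ρR m) m - uR d m < L} :=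
      isOpen_lt (continuous_const.sub (hdiff m).continuous) continuous_const
    obtain ⟨ε, hε, hb⟩ := Metric.isOpen_iff.1 ho x hx
    have hin : ∀ y ∈ Metric.ball x ε, y ∈ D m := fun y hy => by
      have h1 := hb hy
      simp only [D, mem_ofPred_eq] at h1 ⊢
      exact h1.le
    refine ⟨ε / 2, by positivity, hin _ ?_, hin _ ?_⟩ <;>
    · simp [Real.dist_eq, abs_of_pos hε]
      try linarith
  refine ⟨fun m => sInf (D m), fun m => sSup (D m), ?_, ?_, ?_⟩
  · intro m hm
    refine ⟨(hle m hm _ (hSup m hm)).1, ?_, fun _ => ⟨?_, ?_⟩⟩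
    · apply Subset.antisymm
      · intro d hd
        exact hle m hm d hd
      · exact (hord m hm).out (hInf m hm) (hSup m hm)
    · refine le_antisymm (hInf m hm) (not_lt.1 fun h => ?_)
      obtain ⟨ε, hε, h1, -⟩ := hnear m _ h
      linarith [(hle m hm _ h1).1]
    · refine le_antisymm (hSup m hm) (not_lt.1 fun h => ?_)
      obtain ⟨ε, hε, -, h1⟩ := hnear m _ h
      linarith [(hle m hm _ h1).2]
  · intro m₁ h₁ m₂ h₂ h
    change sInf (D m₁) ≤ sInf (D m₂)
    have hq := hInf m₂ h₂
    generalize sInf (D m₂) = q at hq ⊢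
    rcases le_total (ρR m₁) q with hc | hc
    · exact (hle m₁ h₁ _ (hρD m₁)).1.trans hc
    · refine (hle m₁ h₁ q ?_).1
      have a1 := hID m₁ h₁ m₂ h₂ h q _ hc
      have a2 := hmax m₂ h₂ (ρR m₁)
      simp only [D, mem_ofPred_eq] at hq ⊢
      linarith
  · intro m₁ h₁ m₂ h₂ h
    change sSup (D m₁) ≤ sSup (D m₂)
    have hq := hSup m₁ h₁
    generalize sSup (D m₁) = q at hq ⊢
    rcases le_total q (ρR m₂) with hc | hc
    · exact hc.trans (hle m₂ h₂ _ (hρD m₂)).2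
    · refine (hle m₂ h₂ q ?_).2
      have a1 := hID m₁ h₁ m₂ h₂ h _ q hc
      have a2 := hmax m₁ h₁ (ρR m₂)
      simp only [D, mem_ofPred_eq] at hq ⊢
      linarith
end
end

section
/- Let u_R and L ≥ 0 be as follows: u_R : ℝ × [0,1] → ℝ twice continuously differentiable with ∂²u_R/∂d² ≤ −κ < 0 and ∂²u_R/∂d∂m > 0 everywhere, ρ_R(m) its maximizer in d, w_R(d,m) = u_R(ρ_R(m),m) − u_R(d,m), and D(m) = {d : w_R(d,m) ≤ L}, a nonempty compact interval. Let u : ℝ × [0,1] → ℝ be twice continuously differentiable with ∂²u/∂d²(d,m) < 0 and ∂²u/∂d∂m(d,m) > 0 for all d, m. Then for each m ∈ [0,1] the constrained maximizer ρ_*(m) = argmax_{d ∈ D(m)} u(d,m) exists, is unique, and the function m ↦ ρ_*(m) is nondecreasing on [0,1]. -/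
open Set

noncomputable section

lemma aux_diff (v : ℝ → ℝ → ℝ) (h : ContDiff ℝ 2 (fun p : ℝ × ℝ => v p.1 p.2)) (m : ℝ) :
    ContDiff ℝ 2 (fun d => v d m) :=
  h.comp (contDiff_id.prodMk contDiff_const)

lemma aux_incr (v : ℝ → ℝ → ℝ) (h : ContDiff ℝ 2 (fun p : ℝ × ℝ => v p.1 p.2))
    (hcross : ∀ d : ℝ, ∀ m ∈ Icc (0:ℝ) 1,
      0 < deriv (fun m' => deriv (fun d' => v d' m') d) m)
    {m₁ m₂ x y : ℝ} (h₁ : m₁ ∈ Icc (0:ℝ) 1) (h₂ : m₂ ∈ Icc (0:ℝ) 1) (hm : m₁ < m₂)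
    (hxy : y < x) : v x m₁ - v y m₁ < v x m₂ - v y m₂ := by
  have key : StrictMono (fun d => v d m₂ - v d m₁) := by
    apply strictMono_of_deriv_pos
    intro d
    have e : deriv (fun d => v d m₂ - v d m₁) d
        = deriv (fun d => v d m₂) d - deriv (fun d => v d m₁) d :=
      deriv_fun_sub ((aux_diff v h m₂).differentiable (by norm_num) d)
        ((aux_diff v h m₁).differentiable (by norm_num) d)
    rw [e, sub_pos]
    have hmono : StrictMonoOn (fun m' => deriv (fun d' => v d' m') d) (Icc (0:ℝ) 1) := by
      apply strictMonoOn_of_deriv_pos (convex_Icc 0 1)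
      · intro m hm
        exact (differentiableAt_of_deriv_ne_zero
          (hcross d m hm).ne').continuousAt.continuousWithinAt
      · intro m hm
        exact hcross d m (interior_subset hm)
    exact hmono h₁ h₂ hm
  have := key hxy
  simp only at this
  linarith

lemma aux_quad (f : ℝ → ℝ) (hf : ContDiff ℝ 2 f) (κ r : ℝ)
    (hc : ∀ d, deriv (fun d' => deriv f d') d ≤ -κ) (hr : deriv f r = 0) (d : ℝ) :
    f d + κ / 2 * (d - r) ^ 2 ≤ f r := by
  have hd : Differentiable ℝ f := hf.differentiable (by norm_num)
  have hd1 : Differentiable ℝ (deriv f) := by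
    have : ContDiff ℝ (1 + 1) f := by simpa [one_add_one_eq_two] using hf
    exact ((contDiff_succ_iff_deriv.1 this).2.2).differentiable (by norm_num)
  have hg : ∀ x, HasDerivAt (fun d => f d + κ / 2 * (d - r) ^ 2)
      (deriv f x + κ * (x - r)) x := by
    intro x
    have h1 := (((hasDerivAt_id x).sub_const r).pow 2).const_mul (κ / 2)
    have h2 := (hd x).hasDerivAt.add h1
    refine HasDerivAt.congr_deriv h2 ?_
    simp
    ring
  have hg2 : ∀ x, HasDerivAt (fun x => deriv f x + κ * (x - r))
      (deriv (deriv f) x + κ) x := by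
    intro x
    have h1 := ((hasDerivAt_id x).sub_const r).const_mul κ
    have h2 := (hd1 x).hasDerivAt.add h1
    refine HasDerivAt.congr_deriv h2 ?_
    simp
  have hanti : Antitone (fun x => deriv f x + κ * (x - r)) := by
    apply antitone_of_deriv_nonpos (fun x => (hg2 x).differentiableAt)
    intro x
    rw [(hg2 x).deriv]
    have := hc x
    linarith
  have hconc : ConcaveOn ℝ univ (fun d => f d + κ / 2 * (d - r) ^ 2) := by
    apply Antitone.concaveOn_univ_of_deriv (fun x => (hg x).differentiableAt)
    rwa [show deriv (fun d => f d + κ / 2 * (d - r) ^ 2) = _ from funext fun x => (hg x).deriv]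
  have h0 := hg r
  rw [hr] at h0
  simp only [sub_self, mul_zero, add_zero] at h0
  rcases lt_trichotomy d r with h | h | h
  · have := hconc.le_slope_of_hasDerivAt (mem_univ d) (mem_univ r) h h0
    rw [slope_def_field, le_div_iff₀ (by linarith)] at this
    simp at this
    linarith
  · subst h; simp
  · have := hconc.slope_le_of_hasDerivAt (mem_univ r) (mem_univ d) h h0
    rw [slope_def_field, div_le_iff₀ (by linarith)] at this
    simp at this
    linarith

lemma aux_mid (f : ℝ → ℝ) (hf : StrictConcaveOn ℝ univ f) {a b c t : ℝ} (h1 : a ≤ b)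
    (h2 : b ≤ c) (ha : t ≤ f a) (hc : t ≤ f c) : t ≤ f b :=
  (le_min ha hc).trans (hf.concaveOn.min_le_of_mem_Icc (mem_univ a) (mem_univ c) ⟨h1, h2⟩)

/-- the constrained maximizer
`ρ_*(m) = argmax_{d ∈ D(m)} u(d,m)` over the enforceable set
`D(m) = {d : w_R(d,m) ≤ L}` exists, is unique, and is nondecreasing in `m`
on `[0,1]`. -/
theorem constrained_maximizer_monotone (uR : ℝ → ℝ → ℝ)
    (hC2R : ContDiff ℝ 2 (fun p : ℝ × ℝ => uR p.1 p.2))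
    (κ : ℝ) (hκ : 0 < κ)
    (hconcR : ∀ d : ℝ, ∀ m ∈ Icc (0:ℝ) 1,
      deriv (fun d' => deriv (fun d'' => uR d'' m) d') d ≤ -κ)
    (hcrossR : ∀ d : ℝ, ∀ m ∈ Icc (0:ℝ) 1,
      0 < deriv (fun m' => deriv (fun d' => uR d' m') d) m)
    (ρR : ℝ → ℝ)
    (hρR : ∀ m ∈ Icc (0:ℝ) 1, deriv (fun d => uR d m) (ρR m) = 0)
    (L : ℝ) (hL : 0 ≤ L)
    (u : ℝ → ℝ → ℝ)
    (hC2 : ContDiff ℝ 2 (fun p : ℝ × ℝ => u p.1 p.2))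
    (hconc : ∀ d : ℝ, ∀ m ∈ Icc (0:ℝ) 1,
      deriv (fun d' => deriv (fun d'' => u d'' m) d') d < 0)
    (hcross : ∀ d : ℝ, ∀ m ∈ Icc (0:ℝ) 1,
      0 < deriv (fun m' => deriv (fun d' => u d' m') d) m) :
    ∃ ρs : ℝ → ℝ,
      (∀ m ∈ Icc (0:ℝ) 1,
        (uR (ρR m) m - uR (ρs m) m ≤ L) ∧
        (∀ d : ℝ, uR (ρR m) m - uR d m ≤ L → u d m ≤ u (ρs m) m) ∧
        (∀ d : ℝ, uR (ρR m) m - uR d m ≤ L →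
          (∀ d' : ℝ, uR (ρR m) m - uR d' m ≤ L → u d' m ≤ u d m) → d = ρs m)) ∧
      MonotoneOn ρs (Icc (0:ℝ) 1) := by
  have sc : ∀ m ∈ Icc (0:ℝ) 1, StrictConcaveOn ℝ univ (fun d => u d m) := fun m hm =>
    strictConcaveOn_univ_of_deriv2_neg (aux_diff u hC2 m).continuous (fun d => hconc d m hm)
  have scR : ∀ m ∈ Icc (0:ℝ) 1, StrictConcaveOn ℝ univ (fun d => uR d m) := fun m hm =>
    strictConcaveOn_univ_of_deriv2_neg (aux_diff uR hC2R m).continuous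
      (fun d => (hconcR d m hm).trans_lt (by linarith))
  have quad : ∀ m ∈ Icc (0:ℝ) 1, ∀ d, uR d m + κ / 2 * (d - ρR m) ^ 2 ≤ uR (ρR m) m :=
    fun m hm d => aux_quad (fun d => uR d m) (aux_diff uR hC2R m) κ (ρR m)
      (fun d => hconcR d m hm) (hρR m hm) d
  have hmax : ∀ m ∈ Icc (0:ℝ) 1, ∀ d, uR d m ≤ uR (ρR m) m := fun m hm d => by
    have := quad m hm d
    have : 0 ≤ κ / 2 * (d - ρR m) ^ 2 := by positivity
    linarith
  have ex : ∀ m : ℝ, ∃ x : ℝ, m ∈ Icc (0:ℝ) 1 → (uR (ρR m) m - uR x m ≤ L) ∧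
      (∀ d : ℝ, uR (ρR m) m - uR d m ≤ L → u d m ≤ u x m) := by
    intro m
    by_cases hm : m ∈ Icc (0:ℝ) 1
    swap
    · exact ⟨0, fun h => absurd h hm⟩
    have hcl : IsClosed {d : ℝ | uR (ρR m) m - uR d m ≤ L} :=
      isClosed_le (continuous_const.sub (aux_diff uR hC2R m).continuous) continuous_const
    have hsub : {d : ℝ | uR (ρR m) m - uR d m ≤ L} ⊆
        Icc (ρR m - (2 * L / κ + 1)) (ρR m + (2 * L / κ + 1)) := by
      intro d hd
      have hd' : uR (ρR m) m - uR d m ≤ L := hd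
      have h1 := quad m hm d
      have h2 : (d - ρR m) ^ 2 ≤ 2 * L / κ := by
        rw [le_div_iff₀ hκ]
        linarith
      have h3 : 0 ≤ 2 * L / κ := by positivity
      have h4 := abs_le_of_sq_le_sq' (a := d - ρR m) (b := 2 * L / κ + 1)
        (by nlinarith) (by linarith)
      constructor <;> linarith [h4.1, h4.2]
    have hcomp := isCompact_Icc.of_isClosed_subset hcl hsub
    obtain ⟨x, hx, hx'⟩ := hcomp.exists_isMaxOn ⟨ρR m, by simpa using hL⟩
      (aux_diff u hC2 m).continuous.continuousOn
    exact ⟨x, fun _ => ⟨hx, fun d hd => hx' hd⟩⟩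
  choose ρs hρs using ex
  refine ⟨ρs, fun m hm => ⟨(hρs m hm).1, (hρs m hm).2, ?_⟩, ?_⟩
  · intro d hd hd'
    by_contra hne
    obtain ⟨h1, h2⟩ := hρs m hm
    have hs := (sc m hm).2 (mem_univ d) (mem_univ (ρs m)) hne
      (by norm_num : (0:ℝ) < 1 / 2) (by norm_num : (0:ℝ) < 1 / 2) (by norm_num)
    have hc := (scR m hm).2 (mem_univ d) (mem_univ (ρs m)) hne
      (by norm_num : (0:ℝ) < 1 / 2) (by norm_num : (0:ℝ) < 1 / 2) (by norm_num)
    simp only [smul_eq_mul] at hs hc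
    have h3 := h2 (1 / 2 * d + 1 / 2 * ρs m) (by linarith)
    have h4 := hd' _ h1
    linarith
  · intro m₁ h₁ m₂ h₂ h12
    rcases h12.eq_or_lt with rfl | hlt
    · exact le_rfl
    by_contra! hyx
    obtain ⟨a1, a2⟩ := hρs m₁ h₁
    obtain ⟨b1, b2⟩ := hρs m₂ h₂
    have hy : uR (ρR m₁) m₁ - uR (ρs m₂) m₁ ≤ L := by
      rcases lt_or_ge (ρs m₂) (ρR m₁) with h | h
      · have := aux_incr uR hC2R hcrossR h₁ h₂ hlt h
        have := hmax m₂ h₂ (ρR m₁)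
        linarith
      · have := aux_mid _ (scR m₁ h₁) (t := uR (ρR m₁) m₁ - L) h hyx.le
          (by linarith) (by linarith)
        linarith
    have hx : uR (ρR m₂) m₂ - uR (ρs m₁) m₂ ≤ L := by
      rcases lt_or_ge (ρR m₂) (ρs m₁) with h | h
      · have := aux_incr uR hC2R hcrossR h₁ h₂ hlt h
        have := hmax m₁ h₁ (ρR m₂)
        linarith
      · have := aux_mid _ (scR m₂ h₂) (t := uR (ρR m₂) m₂ - L) hyx.le h
          (by linarith) (by linarith)
        linarith
    have := aux_incr u hC2 hcross h₁ h₂ hlt hyx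
    have := a2 _ hy
    have := b2 _ hx
    linarith
end
end

section
/- In the quadratic setup, u_* is continuously differentiable on [0,1]; and at every θ ∈ [0,1] with |θ − ρ_R(θ)| ≠ ℓ, u_* is twice differentiable with u_*''(θ) = 1 if |θ − ρ_R(θ)| < ℓ and u_*''(θ) = a(2 − a) if |θ − ρ_R(θ)| > ℓ. -/
open Set

noncomputable section

/-- Receiver's preferred decision in the quadratic setup. -/
def rhoR (a b θ : ℝ) : ℝ := a * θ + b

/-- Second-best decision in the quadratic setup with leeway `ℓ`. -/
def rhoStar (a b ℓ θ : ℝ) : ℝ :=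
  if ℓ < θ - rhoR a b θ then rhoR a b θ + ℓ
  else if θ - rhoR a b θ < -ℓ then rhoR a b θ - ℓ
  else θ

/-- Joint payoff under the second-best decision in the quadratic setup. -/
def uStar (a b ℓ θ : ℝ) : ℝ := θ * rhoStar a b ℓ θ - (rhoStar a b ℓ θ) ^ 2 / 2

theorem hasDerivAt_max_sq (x : ℝ) :
    HasDerivAt (fun y : ℝ => (max y 0) ^ 2) (2 * max x 0) x := by
  have hsq : HasDerivAt (fun y : ℝ => y ^ 2) (2 * x) x := by
    simpa using hasDerivAt_pow 2 x
  rcases lt_trichotomy x 0 with h | h | h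
  · rw [max_eq_right h.le, mul_zero]
    refine (hasDerivAt_const x (0:ℝ)).congr_of_eventuallyEq ?_
    filter_upwards [Iio_mem_nhds h] with y hy
    rw [max_eq_right (le_of_lt hy)]; norm_num
  · subst h
    have h1 : HasDerivWithinAt (fun y : ℝ => (max y 0) ^ 2) (2 * max 0 0) (Iic 0) (0:ℝ) := by
      have h0 : HasDerivWithinAt (fun _ : ℝ => (0:ℝ)) (2 * max 0 0) (Iic 0) (0:ℝ) := by
        simpa using hasDerivWithinAt_const (0:ℝ) (Iic 0) (0:ℝ)
      refine h0.congr (fun y hy => ?_) (by simp)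
      rw [max_eq_right hy]; norm_num
    have h2 : HasDerivWithinAt (fun y : ℝ => (max y 0) ^ 2) (2 * max 0 0) (Ici 0) (0:ℝ) := by
      have h0 : HasDerivWithinAt (fun y : ℝ => y ^ 2) (2 * max 0 0) (Ici 0) (0:ℝ) := by
        simpa using hsq.hasDerivWithinAt
      refine h0.congr (fun y hy => ?_) (by simp)
      rw [max_eq_left hy]
    have h3 := h1.union h2
    rw [Iic_union_Ici] at h3
    exact hasDerivWithinAt_univ.mp h3
  · rw [max_eq_left h.le]
    refine hsq.congr_of_eventuallyEq ?_
    filter_upwards [Ioi_mem_nhds h] with y hy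
    rw [max_eq_left (le_of_lt hy)]

theorem uStar_eq (a b ℓ : ℝ) (hℓ : 0 < ℓ) : uStar a b ℓ = fun θ =>
    θ ^ 2 / 2 - (max ((1 - a) * θ - b - ℓ) 0) ^ 2 / 2
      - (max (-((1 - a) * θ - b) - ℓ) 0) ^ 2 / 2 := by
  funext θ
  unfold uStar rhoStar rhoR
  split_ifs with h1 h2
  · rw [max_eq_left (by linarith), max_eq_right (by linarith)]; ring
  · rw [max_eq_right (by linarith), max_eq_left (by linarith)]; ring
  · rw [max_eq_right (by linarith), max_eq_right (by linarith)]; ring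

/-- in the quadratic setup, `u_*` is continuously differentiable
on `[0,1]`, and at every `θ ∈ [0,1]` with `|θ − ρ_R(θ)| ≠ ℓ`, `u_*` is twice
differentiable with `u_*'' = 1` if `|θ − ρ_R(θ)| < ℓ` and `u_*'' = a(2 − a)` if
`|θ − ρ_R(θ)| > ℓ`. -/
theorem uStar_smoothness (a b ℓ : ℝ) (ha : 0 < a) (hℓ : 0 < ℓ) :
    ∃ du : ℝ → ℝ,
      ContinuousOn du (Icc (0:ℝ) 1) ∧
      (∀ θ ∈ Icc (0:ℝ) 1, HasDerivAt (uStar a b ℓ) (du θ) θ) ∧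
      (∀ θ ∈ Icc (0:ℝ) 1, |θ - rhoR a b θ| ≠ ℓ →
        HasDerivAt du (if |θ - rhoR a b θ| < ℓ then 1 else a * (2 - a)) θ) := by
  have hd : ∀ θ, θ - rhoR a b θ = (1 - a) * θ - b := fun θ => by unfold rhoR; ring
  have hl : ∀ θ : ℝ, HasDerivAt (fun θ => (1 - a) * θ - b) (1 - a) θ := fun θ => by
    simpa using ((hasDerivAt_id θ).const_mul (1 - a)).sub_const b
  have hc : Continuous (fun θ : ℝ => (1 - a) * θ - b) := by fun_prop
  refine ⟨fun θ => θ - (1 - a) * max ((1 - a) * θ - b - ℓ) 0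
      + (1 - a) * max (-((1 - a) * θ - b) - ℓ) 0, ?_, ?_, ?_⟩
  · fun_prop
  · intro θ _
    rw [uStar_eq a b ℓ hℓ]
    have h0 : HasDerivAt (fun y : ℝ => y ^ 2) (2 * θ) θ := by
      simpa using hasDerivAt_pow 2 θ
    have h1 := (hasDerivAt_max_sq ((1 - a) * θ - b - ℓ)).comp θ ((hl θ).sub_const ℓ)
    have h2 := (hasDerivAt_max_sq (-((1 - a) * θ - b) - ℓ)).comp θ ((hl θ).neg.sub_const ℓ)
    refine (((h0.div_const 2).sub (h1.div_const 2)).sub (h2.div_const 2)).congr_deriv ?_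
    ring
  · intro θ _ hne
    rw [hd] at hne ⊢
    split_ifs with h
    · obtain ⟨h1, h2⟩ := abs_lt.mp h
      refine (hasDerivAt_id θ).congr_of_eventuallyEq ?_
      filter_upwards [hc.continuousAt.eventually_lt continuousAt_const h2,
        continuousAt_const.eventually_lt hc.continuousAt h1] with y hy1 hy2
      rw [max_eq_right (by linarith), max_eq_right (by linarith)]; simp
    · have h' : ℓ < |(1 - a) * θ - b| := lt_of_le_of_ne (not_lt.mp h) hne.symm
      rcases lt_abs.mp h' with h1 | h1
      · have h0 := (hasDerivAt_id θ).sub (((hl θ).sub_const ℓ).const_mul (1 - a))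
        refine (h0.congr_deriv (by ring)).congr_of_eventuallyEq ?_
        filter_upwards [continuousAt_const.eventually_lt hc.continuousAt h1] with y hy
        rw [max_eq_left (by linarith), max_eq_right (by linarith)]; simp
      · have h0 := (hasDerivAt_id θ).add (((hl θ).neg.sub_const ℓ).const_mul (1 - a))
        refine (h0.congr_deriv (by ring)).congr_of_eventuallyEq ?_
        filter_upwards [continuousAt_const.eventually_lt hc.neg.continuousAt h1] with y hy
        replace hy : ℓ < -((1 - a) * y - b) := hy
        rw [max_eq_right (by linarith), max_eq_left (by linarith)]; simp
end
end

section
/- In the quadratic setup, let F be any cumulative distribution function on [0,1] with strictly positive density, and define the set of extreme states X = {θ ∈ [0,1] : |θ − ρ_R(θ)| > ℓ}. Then there exists an open pooling set P with ∫_0^1 u_*(θ) dG_P(θ) > ∫_0^1 u_*(θ) dF(θ) (i.e., full separation is not optimal for u_*) if and only if X ≠ ∅ and a > 2. -/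
open MeasureTheory Set
open scoped Classical

noncomputable section

lemma mean_facts (f : ℝ → ℝ) (hf : IsDensity f) (x y : ℝ) (h0 : 0 ≤ x) (hxy : x < y)
    (h1 : y ≤ 1) : condMean f x y ∈ Icc x y ∧
      (∫ t in x..y, (t - condMean f x y) * f t) = 0 := by
  obtain ⟨hpos, hint, -⟩ := hf
  have hsub : Icc x y ⊆ Icc (0:ℝ) 1 := Icc_subset_Icc h0 h1
  have hi : IntervalIntegrable f volume x y :=
    (intervalIntegrable_iff_integrableOn_Icc_of_le hxy.le).2 (hint.mono_set hsub)
  have hi2 : IntervalIntegrable (fun t => t * f t) volume x y :=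
    hi.continuousOn_mul continuousOn_id
  have hp : 0 < ∫ t in x..y, f t :=
    intervalIntegral.intervalIntegral_pos_of_pos_on hi
      (fun t ht => hpos t (hsub (Ioo_subset_Icc_self ht))) hxy
  refine ⟨⟨?_, ?_⟩, ?_⟩
  · unfold condMean
    rw [le_div_iff₀ hp, ← intervalIntegral.integral_const_mul]
    refine intervalIntegral.integral_mono_on hxy.le (hi.const_mul _) hi2 fun t ht => ?_
    exact mul_le_mul_of_nonneg_right ht.1 (hpos t (hsub ht)).le
  · unfold condMean
    rw [div_le_iff₀ hp, ← intervalIntegral.integral_const_mul]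
    refine intervalIntegral.integral_mono_on hxy.le hi2 (hi.const_mul _) fun t ht => ?_
    exact mul_le_mul_of_nonneg_right ht.2 (hpos t (hsub ht)).le
  · have : ∀ t, (t - condMean f x y) * f t = t * f t - condMean f x y * f t := fun t => by ring
    simp_rw [this]
    rw [intervalIntegral.integral_sub hi2 (hi.const_mul _), intervalIntegral.integral_const_mul]
    unfold condMean
    field_simp
    simp

/-- Soft threshold. -/
def softT (l d : ℝ) : ℝ := max (d - l) 0 + min (d + l) 0

lemma uStar_eq_s17 (a b l θ : ℝ) (hl : 0 < l) :
    uStar a b l θ = θ ^ 2 / 2 - (softT l (θ - rhoR a b θ)) ^ 2 / 2 := by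
  unfold uStar rhoStar softT
  split_ifs with h1 h2
  · rw [max_eq_left (by linarith), min_eq_right (by linarith)]; ring
  · rw [max_eq_right (by linarith), min_eq_left (by linarith)]; ring
  · rw [max_eq_right (by linarith), min_eq_right (by linarith)]; ring

lemma uStar_cont (a b l : ℝ) (hl : 0 < l) : Continuous (uStar a b l) := by
  have : uStar a b l = fun θ => θ ^ 2 / 2 - (softT l (θ - rhoR a b θ)) ^ 2 / 2 := by
    funext θ; exact uStar_eq_s17 a b l θ hl
  rw [this]; unfold softT rhoR; fun_prop

lemma softT_zero (l d : ℝ) (h : |d| ≤ l) : softT l d = 0 := by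
  have := abs_le.1 h
  unfold softT
  rw [max_eq_right (by linarith), min_eq_right (by linarith)]; ring

lemma softT_proj (l d : ℝ) (hl : 0 < l) : |d - softT l d| ≤ l := by
  unfold softT
  rw [abs_le]
  rcases le_total (d - l) 0 with h | h <;> rcases le_total (d + l) 0 with h' | h' <;>
    simp only [max_eq_left, max_eq_right, min_eq_left, min_eq_right, h, h'] <;>
    constructor <;> linarith

lemma softT_dist (l d t : ℝ) (hl : 0 < l) (ht : |t| ≤ l) : (softT l d) ^ 2 ≤ (d - t) ^ 2 := by
  have := abs_le.1 ht
  unfold softT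
  rcases le_total (d - l) 0 with h | h <;> rcases le_total (d + l) 0 with h' | h' <;>
    simp only [max_eq_left, max_eq_right, min_eq_left, min_eq_right, h, h'] <;> nlinarith

lemma support_line (a b l : ℝ) (ha : 0 < a) (hl : 0 < l)
    (h : ¬ ((∃ θ ∈ Icc (0:ℝ) 1, l < |θ - rhoR a b θ|) ∧ 2 < a)) :
    ∀ m ∈ Icc (0:ℝ) 1, ∃ c : ℝ, ∀ θ ∈ Icc (0:ℝ) 1,
      uStar a b l m + c * (θ - m) ≤ uStar a b l θ := by
  intro m hm
  refine ⟨m - (1 - a) * softT l (m - rhoR a b m), fun θ hθ => ?_⟩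
  rw [uStar_eq_s17 a b l m hl, uStar_eq_s17 a b l θ hl]
  by_cases h2 : 2 < a
  · have hX : ∀ θ ∈ Icc (0:ℝ) 1, |θ - rhoR a b θ| ≤ l := by
      intro θ hθ
      by_contra hc
      exact h ⟨⟨θ, hθ, not_le.1 hc⟩, h2⟩
    rw [softT_zero l _ (hX m hm), softT_zero l _ (hX θ hθ)]
    nlinarith [sq_nonneg (θ - m)]
  · have h1 := softT_dist l (θ - rhoR a b θ) _ hl (softT_proj l (m - rhoR a b m) hl)
    generalize softT l (m - rhoR a b m) = s at *
    generalize softT l (θ - rhoR a b θ) = r at *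
    unfold rhoR at h1
    have h3 : 0 ≤ a * (2 - a) * (θ - m) ^ 2 :=
      mul_nonneg (mul_nonneg ha.le (by linarith)) (sq_nonneg _)
    nlinarith

lemma comp_facts (P : Set ℝ) (hP : IsPoolingSet P) (x : ℝ) (hx : x ∈ P) :
    0 ≤ compInf P x ∧ compInf P x < compSup P x ∧ compSup P x ≤ 1 ∧
    connectedComponentIn P x =ᵐ[volume] Ioc (compInf P x) (compSup P x) ∧
    MeasurableSet (connectedComponentIn P x) ∧
    (interior (connectedComponentIn P x)).Nonempty := by
  obtain ⟨U, hU, hPU⟩ := hP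
  have hsub : connectedComponentIn P x ⊆ Icc (0:ℝ) 1 := fun y hy => by
    have := connectedComponentIn_subset P x hy
    rw [hPU] at this; exact this.2
  have hconn : IsPreconnected (connectedComponentIn P x) := isPreconnected_connectedComponentIn
  have hxI : x ∈ connectedComponentIn P x := mem_connectedComponentIn hx
  have hbb : BddBelow (connectedComponentIn P x) := bddBelow_Icc.mono hsub
  have hba : BddAbove (connectedComponentIn P x) := bddAbove_Icc.mono hsub
  have hx' := hx
  rw [hPU] at hx'
  obtain ⟨ε, hε, hball⟩ := Metric.isOpen_iff.1 hU x hx'.1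
  have hc : Metric.ball x ε ∩ Icc (0:ℝ) 1 ⊆ connectedComponentIn P x := by
    apply IsPreconnected.subset_connectedComponentIn
    · exact ((convex_ball x ε).inter (convex_Icc 0 1)).isPreconnected
    · exact ⟨Metric.mem_ball_self hε, hx'.2⟩
    · rw [hPU]; exact inter_subset_inter_left _ hball
  have hne : (Metric.ball x ε ∩ Ioo (0:ℝ) 1).Nonempty := by
    have : x ∈ closure (Ioo (0:ℝ) 1) := by
      rw [closure_Ioo (by norm_num)]; exact hx'.2
    exact mem_closure_iff.1 this _ Metric.isOpen_ball (Metric.mem_ball_self hε)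
  have hint : (interior (connectedComponentIn P x)).Nonempty := by
    refine hne.mono (interior_maximal ?_ (Metric.isOpen_ball.inter isOpen_Ioo))
    exact (inter_subset_inter_right _ Ioo_subset_Icc_self).trans hc
  have hIcc : connectedComponentIn P x ⊆ Icc (compInf P x) (compSup P x) :=
    fun y hy => ⟨csInf_le hbb hy, le_csSup hba hy⟩
  have hIoo : Ioo (compInf P x) (compSup P x) ⊆ connectedComponentIn P x :=
    (show IsConnected (connectedComponentIn P x) from ⟨⟨x, hxI⟩, hconn⟩).Ioo_csInf_csSup_subset hbb hba
  refine ⟨le_csInf ⟨x, hxI⟩ fun y hy => (hsub hy).1, ?_,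
    csSup_le ⟨x, hxI⟩ fun y hy => (hsub hy).2, ?_, hconn.ordConnected.measurableSet, hint⟩
  · have := hint.mono (interior_mono hIcc)
    rw [interior_Icc] at this
    exact nonempty_Ioo.1 this
  · refine Filter.EventuallyLE.antisymm ?_ ?_
    · exact (HasSubset.Subset.eventuallyLE hIcc).trans Ioc_ae_eq_Icc.symm.le
    · exact Ioo_ae_eq_Ioc.symm.le.trans (HasSubset.Subset.eventuallyLE hIoo)

lemma comp_eq (P : Set ℝ) (x y : ℝ) (hy : y ∈ connectedComponentIn P x) (f : ℝ → ℝ) :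
    poolMean f P y = condMean f (compInf P x) (compSup P x) := by
  have h := connectedComponentIn_eq hy
  have hyP : y ∈ P := connectedComponentIn_subset P x hy
  unfold poolMean compInf compSup
  rw [if_pos hyP, h]

/-- The components of `P`. -/
def comps (P : Set ℝ) : Set (Set ℝ) := (fun x => connectedComponentIn P x) '' P

lemma comps_disj (P : Set ℝ) : (comps P).PairwiseDisjoint id := by
  rintro _ ⟨x, hx, rfl⟩ _ ⟨y, hy, rfl⟩ hne
  refine disjoint_left.2 fun z hz hz' => hne ?_
  exact (connectedComponentIn_eq hz).trans (connectedComponentIn_eq hz').symm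

lemma comps_countable (P : Set ℝ) (hP : IsPoolingSet P) : (comps P).Countable := by
  refine (comps_disj P).countable_of_nonempty_interior ?_
  rintro _ ⟨x, hx, rfl⟩
  exact (comp_facts P hP x hx).2.2.2.2.2

lemma comps_union (P : Set ℝ) : (⋃ I : comps P, (I : Set ℝ)) = P := by
  ext y
  simp only [mem_iUnion]
  constructor
  · rintro ⟨⟨_, x, hx, rfl⟩, hy⟩
    exact connectedComponentIn_subset P x hy
  · intro hy
    exact ⟨⟨_, y, hy, rfl⟩, mem_connectedComponentIn hy⟩

lemma comps_meas (P : Set ℝ) (hP : IsPoolingSet P) (I : comps P) : MeasurableSet (I : Set ℝ) := by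
  obtain ⟨_, x, hx, rfl⟩ := I
  exact (comp_facts P hP x hx).2.2.2.2.1

lemma pool_integrable (f u : ℝ → ℝ) (hu : Continuous u) (hf : IsDensity f) (P : Set ℝ)
    (hP : IsPoolingSet P) :
    IntegrableOn (fun θ => u (poolMean f P θ) * f θ) (Icc 0 1) := by
  have hPm : MeasurableSet P := by
    obtain ⟨U, hU, rfl⟩ := hP
    exact hU.measurableSet.inter measurableSet_Icc
  have hPs : P ⊆ Icc (0:ℝ) 1 := by
    obtain ⟨U, hU, rfl⟩ := hP
    exact inter_subset_right
  have hcount := (comps_countable P hP).to_subtype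
  have hintf := hf.2.1
  rw [← union_diff_cancel hPs]
  refine IntegrableOn.union ?_ ?_
  · obtain ⟨C, hC⟩ := isCompact_Icc.exists_bound_of_continuousOn (s := Icc (0:ℝ) 1) hu.continuousOn
    refine Integrable.mono' ((hintf.mono_set hPs).norm.const_mul C) ?_ ?_
    · rw [← comps_union P, aestronglyMeasurable_iUnion_iff]
      intro I
      have hm := comps_meas P hP I
      obtain ⟨_, x, hx, rfl⟩ := I
      have : AEStronglyMeasurable
          (fun θ => u (condMean f (compInf P x) (compSup P x)) * f θ)
          (volume.restrict (connectedComponentIn P x)) :=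
        ((hintf.mono_set ((connectedComponentIn_subset P x).trans hPs)).const_mul _).1
      refine this.congr ?_
      refine (ae_restrict_iff' hm).2 (Filter.Eventually.of_forall fun y hy => ?_)
      show _ = u (poolMean f _ y) * f y
      rw [comps_union, comp_eq P x y hy]
    · refine (ae_restrict_iff' hPm).2 (Filter.Eventually.of_forall fun y hy => ?_)
      rw [norm_mul]
      refine mul_le_mul_of_nonneg_right (hC _ ?_) (norm_nonneg _)
      rw [comp_eq P y y (mem_connectedComponentIn hy)]
      obtain ⟨h1, h2, h3, -⟩ := comp_facts P hP y hy
      exact Icc_subset_Icc h1 h3 (mean_facts f hf _ _ h1 h2 h3).1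
  · have : IntegrableOn (fun θ => u θ * f θ) (Icc (0:ℝ) 1 \ P) :=
      (hintf.continuousOn_mul hu.continuousOn isCompact_Icc).mono_set diff_subset
    refine this.congr_fun (fun y hy => ?_) (measurableSet_Icc.diff hPm)
    simp only [poolMean, if_neg hy.2]

lemma uf_integrable (f u : ℝ → ℝ) (hu : Continuous u) (hf : IsDensity f) :
    IntegrableOn (fun θ => u θ * f θ) (Icc 0 1) :=
  hf.2.1.continuousOn_mul hu.continuousOn isCompact_Icc

lemma pool_diff (f u : ℝ → ℝ) (hu : Continuous u) (hf : IsDensity f) (P : Set ℝ)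
    (hP : IsPoolingSet P) :
    poolValue f u ∅ - poolValue f u P = ∫ θ in P, (u θ * f θ - u (poolMean f P θ) * f θ) := by
  have hPm : MeasurableSet P := by
    obtain ⟨U, hU, rfl⟩ := hP
    exact hU.measurableSet.inter measurableSet_Icc
  have hPs : P ⊆ Icc (0:ℝ) 1 := by
    obtain ⟨U, hU, rfl⟩ := hP
    exact inter_subset_right
  have h0 : poolValue f u ∅ = ∫ θ in Icc (0:ℝ) 1, u θ * f θ := by
    unfold poolValue poolMean
    simp only [mem_empty_iff_false, if_false]
    rw [intervalIntegral.integral_of_le zero_le_one, integral_Icc_eq_integral_Ioc]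
  have h1 : poolValue f u P = ∫ θ in Icc (0:ℝ) 1, u (poolMean f P θ) * f θ := by
    unfold poolValue
    rw [intervalIntegral.integral_of_le zero_le_one, integral_Icc_eq_integral_Ioc]
  rw [h0, h1, ← integral_sub (uf_integrable f u hu hf) (pool_integrable f u hu hf P hP)]
  refine setIntegral_eq_of_subset_of_forall_diff_eq_zero measurableSet_Icc hPs fun y hy => ?_
  simp only [poolMean, if_neg hy.2, sub_self]

lemma comp_center (f : ℝ → ℝ) (hf : IsDensity f) (P : Set ℝ) (hP : IsPoolingSet P)
    (x : ℝ) (hx : x ∈ P) : (∫ t in connectedComponentIn P x,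
      (t - condMean f (compInf P x) (compSup P x)) * f t) = 0 := by
  obtain ⟨h1, h2, h3, h4, -⟩ := comp_facts P hP x hx
  rw [setIntegral_congr_set h4, ← intervalIntegral.integral_of_le h2.le]
  exact (mean_facts f hf _ _ h1 h2 h3).2

lemma jensen (f u : ℝ → ℝ) (hu : Continuous u) (hf : IsDensity f) (P : Set ℝ)
    (hP : IsPoolingSet P)
    (hs : ∀ m ∈ Icc (0:ℝ) 1, ∃ c : ℝ, ∀ θ ∈ Icc (0:ℝ) 1, u m + c * (θ - m) ≤ u θ) :
    poolValue f u P ≤ poolValue f u ∅ := by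
  have hPs : P ⊆ Icc (0:ℝ) 1 := by
    obtain ⟨U, hU, rfl⟩ := hP
    exact inter_subset_right
  have hcount := (comps_countable P hP).to_subtype
  rw [← sub_nonneg, pool_diff f u hu hf P hP]
  have hi : IntegrableOn (fun θ => u θ * f θ - u (poolMean f P θ) * f θ) (Icc 0 1) :=
    (uf_integrable f u hu hf).sub (pool_integrable f u hu hf P hP)
  have hiP := hi.mono_set hPs
  have key : ∀ I : comps P,
      0 ≤ ∫ θ in (I : Set ℝ), (u θ * f θ - u (poolMean f P θ) * f θ) := by
    intro I
    have hm := comps_meas P hP I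
    obtain ⟨_, x, hx, rfl⟩ := I
    have hIs : connectedComponentIn P x ⊆ Icc 0 1 := (connectedComponentIn_subset P x).trans hPs
    obtain ⟨h1, h2, h3, -⟩ := comp_facts P hP x hx
    obtain ⟨c, hc⟩ := hs _ (Icc_subset_Icc h1 h3 (mean_facts f hf _ _ h1 h2 h3).1)
    have h0 : (∫ t in connectedComponentIn P x,
      c * ((t - condMean f (compInf P x) (compSup P x)) * f t)) = 0 := by
      rw [integral_const_mul, comp_center f hf P hP x hx, mul_zero]
    rw [← h0]
    refine setIntegral_mono_on ?_ (hi.mono_set hIs) hm fun y hy => ?_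
    · refine Integrable.const_mul ?_ c
      have : IntegrableOn (fun t => (t - condMean f (compInf P x) (compSup P x)) * f t) (Icc 0 1) :=
        hf.2.1.continuousOn_mul (by fun_prop) isCompact_Icc
      exact this.mono_set hIs
    · rw [comp_eq P x y hy]
      nlinarith [hc y (hIs hy), hf.1 y (hIs hy)]
  have hU := integral_iUnion (μ := volume) (s := fun I : comps P => (I : Set ℝ))
    (f := fun θ => u θ * f θ - u (poolMean f P θ) * f θ) (comps_meas P hP)
    (fun I J hIJ => comps_disj P I.2 J.2 (fun h => hIJ (Subtype.ext h)))
    (by rw [comps_union]; exact hiP)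
  rw [comps_union] at hU
  rw [hU]
  exact tsum_nonneg key

lemma interval_in_X (a b l : ℝ) (h : ∃ θ ∈ Icc (0:ℝ) 1, l < |θ - rhoR a b θ|) :
    ∃ p q : ℝ, 0 ≤ p ∧ p < q ∧ q ≤ 1 ∧ ((∀ θ ∈ Icc p q, l < θ - rhoR a b θ) ∨
      (∀ θ ∈ Icc p q, θ - rhoR a b θ < -l)) := by
  obtain ⟨x, hx, hlx⟩ := h
  have main : ∀ V : Set ℝ, IsOpen V → x ∈ V → ∃ p q : ℝ, 0 ≤ p ∧ p < q ∧ q ≤ 1 ∧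
      Icc p q ⊆ V := by
    intro V hV hxV
    have hcl : x ∈ closure (Ioo (0:ℝ) 1) := by
      rw [closure_Ioo (by norm_num)]; exact hx
    obtain ⟨y, hyV, hy⟩ := mem_closure_iff.1 hcl V hV hxV
    obtain ⟨ε, hε, hb⟩ := Metric.isOpen_iff.1 (hV.inter isOpen_Ioo) y ⟨hyV, hy⟩
    have hsub : Icc (y - ε/2) (y + ε/2) ⊆ V ∩ Ioo 0 1 := by
      refine Subset.trans ?_ hb
      rw [Real.ball_eq_Ioo]
      exact Icc_subset_Ioo (by linarith) (by linarith)
    refine ⟨y - ε/2, y + ε/2, ?_, by linarith, ?_, fun z hz => (hsub hz).1⟩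
    · exact (hsub (left_mem_Icc.2 (by linarith))).2.1.le
    · exact (hsub (right_mem_Icc.2 (by linarith))).2.2.le
  have hcont : Continuous fun θ : ℝ => θ - rhoR a b θ := by unfold rhoR; fun_prop
  rcases lt_abs.1 hlx with h | h
  · obtain ⟨p, q, h0, h1, h2, h3⟩ := main _ (isOpen_lt continuous_const hcont) h
    exact ⟨p, q, h0, h1, h2, Or.inl h3⟩
  · obtain ⟨p, q, h0, h1, h2, h3⟩ := main {θ | θ - rhoR a b θ < -l}
      (isOpen_lt hcont continuous_const) (by simp only [mem_setOf_eq]; linarith)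
    exact ⟨p, q, h0, h1, h2, Or.inr h3⟩

lemma expand (a b l p q m : ℝ) (hl : 0 < l) (hm : m ∈ Icc p q)
    (h : (∀ θ ∈ Icc p q, l < θ - rhoR a b θ) ∨ (∀ θ ∈ Icc p q, θ - rhoR a b θ < -l)) :
    ∃ c : ℝ, ∀ θ ∈ Icc p q, uStar a b l θ - uStar a b l m =
      c * (θ - m) - a * (a - 2) / 2 * (θ - m) ^ 2 := by
  rcases h with h | h
  · refine ⟨m - (1 - a) * (m - rhoR a b m - l), fun θ hθ => ?_⟩
    unfold uStar rhoStar
    rw [if_pos (h θ hθ), if_pos (h m hm)]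
    unfold rhoR
    ring
  · refine ⟨m - (1 - a) * (m - rhoR a b m + l), fun θ hθ => ?_⟩
    unfold uStar rhoStar
    have h1 := h θ hθ
    have h2 := h m hm
    rw [if_neg (by linarith), if_pos h1, if_neg (by linarith), if_pos h2]
    unfold rhoR
    ring

lemma pool_good (a b l : ℝ) (hl : 0 < l) (f : ℝ → ℝ) (hf : IsDensity f)
    (hX : ∃ θ ∈ Icc (0:ℝ) 1, l < |θ - rhoR a b θ|) (h2 : 2 < a) :
    ∃ P : Set ℝ, IsPoolingSet P ∧
        poolValue f (uStar a b l) (∅ : Set ℝ) < poolValue f (uStar a b l) P := by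
  obtain ⟨p, q, h0, hpq, h1, hX⟩ := interval_in_X a b l hX
  have hsub : Icc p q ⊆ Icc (0:ℝ) 1 := Icc_subset_Icc h0 h1
  have hP : IsPoolingSet (Ioo p q) :=
    ⟨Ioo p q, isOpen_Ioo, (inter_eq_left.2 (Ioo_subset_Icc_self.trans hsub)).symm⟩
  refine ⟨Ioo p q, hP, ?_⟩
  rw [← sub_neg, pool_diff f _ (uStar_cont a b l hl) hf _ hP]
  obtain ⟨hm, hm0⟩ := mean_facts f hf p q h0 hpq h1
  obtain ⟨c, hc⟩ := expand a b l p q _ hl hm hX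
  have hpm : ∀ y ∈ Ioo p q, poolMean f (Ioo p q) y = condMean f p q := by
    intro y hy
    unfold poolMean compInf compSup
    rw [if_pos hy, isPreconnected_Ioo.connectedComponentIn hy, csInf_Ioo hpq, csSup_Ioo hpq]
  generalize condMean f p q = m at *
  have hi : IntervalIntegrable f volume p q :=
    (intervalIntegrable_iff_integrableOn_Icc_of_le hpq.le).2 (hf.2.1.mono_set hsub)
  have hi1 : IntervalIntegrable (fun t => (t - m) * f t) volume p q :=
    hi.continuousOn_mul (by fun_prop)
  have hi2 : IntervalIntegrable (fun t => (t - m) ^ 2 * f t) volume p q :=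
    hi.continuousOn_mul (by fun_prop)
  have hpos : 0 < ∫ t in p..q, (t - m) ^ 2 * f t := by
    rw [intervalIntegral.integral_of_le hpq.le, integral_Ioc_eq_integral_Ioo]
    rw [setIntegral_pos_iff_support_of_nonneg_ae]
    · have hss : Ioo p q \ {m} ⊆ Function.support (fun t => (t - m) ^ 2 * f t) ∩ Ioo p q := by
        intro t ht
        refine ⟨?_, ht.1⟩
        exact mul_ne_zero (pow_ne_zero _ (sub_ne_zero.2 ht.2))
          (hf.1 t (hsub (Ioo_subset_Icc_self ht.1))).ne'
      refine lt_of_lt_of_le ?_ (measure_mono hss)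
      rw [measure_sdiff_null (by simp)]
      simp [hpq]
    · refine (ae_restrict_iff' measurableSet_Ioo).2 (Filter.Eventually.of_forall fun t ht => ?_)
      exact mul_nonneg (sq_nonneg _) (hf.1 t (hsub (Ioo_subset_Icc_self ht))).le
    · exact ((intervalIntegrable_iff_integrableOn_Icc_of_le hpq.le).1 hi2).mono_set
        Ioo_subset_Icc_self
  have heq : (∫ θ in Ioo p q, (uStar a b l θ * f θ - uStar a b l (poolMean f (Ioo p q) θ) * f θ))
      = ∫ θ in Ioo p q, (c * ((θ - m) * f θ) - a * (a - 2) / 2 * ((θ - m) ^ 2 * f θ)) := by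
    refine setIntegral_congr_fun measurableSet_Ioo fun y hy => ?_
    rw [hpm y hy, ← sub_mul, hc y (Ioo_subset_Icc_self hy)]
    ring
  rw [heq, ← integral_Ioc_eq_integral_Ioo, ← intervalIntegral.integral_of_le hpq.le,
    intervalIntegral.integral_sub (hi1.const_mul _) (hi2.const_mul _),
    intervalIntegral.integral_const_mul, intervalIntegral.integral_const_mul, hm0]
  have : 0 < a * (a - 2) / 2 := by
    have : 0 < a * (a - 2) := mul_pos (by linarith) (by linarith)
    linarith
  nlinarith [mul_pos this hpos]

/-- in the quadratic setup, full separation is not optimal for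
`u_*` (some pooling set yields a strictly larger value) if and only if the set
of extreme states `X = {θ ∈ [0,1] : |θ − ρ_R(θ)| > ℓ}` is nonempty and the
receiver is highly responsive (`a > 2`). -/
theorem pooling_beneficial_iff (a b ℓ : ℝ) (ha : 0 < a) (hℓ : 0 < ℓ)
    (f : ℝ → ℝ) (hf : IsDensity f) :
    (∃ P : Set ℝ, IsPoolingSet P ∧
        poolValue f (uStar a b ℓ) (∅ : Set ℝ) < poolValue f (uStar a b ℓ) P)
      ↔ ((∃ θ ∈ Icc (0:ℝ) 1, ℓ < |θ - rhoR a b θ|) ∧ 2 < a) := by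
  constructor
  · rintro ⟨P, hP, hlt⟩
    by_contra hc
    exact absurd hlt (not_lt.2 (jensen f _ (uStar_cont a b ℓ hℓ) hf P hP
      (support_line a b ℓ ha hℓ hc)))
  · rintro ⟨hX, h2⟩
    exact pool_good a b ℓ hℓ f hf hX h2
end
end
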